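/- Suppose 𝒮 is finite. For every n≥1 and all R̂₁,R̂₂>0 there exist operators T_X, T_Y, T₀ on (ℂ^𝒳)^{⊗n}⊗(ℂ^𝒴)^{⊗n}⊗H_B^{⊗n} with 0⪯T_X,T_Y,T₀⪯I such that for all probability distributions P_X on 𝒳 and P_Y on 𝒴 and all t∈(0,1), with f := (n+1)^{|𝒮|−1 + t|𝒳||𝒴|(d_B−1)d_B/2 + (d_B−1)t|𝒳||𝒴|}, g₁ := n^{|𝒳|d_B(d_B−1)/2}Λ(n,d_B)^{|𝒳|}, g₂ := n^{|𝒴|d_B(d_B−1)/2}Λ(n,d_B)^{|𝒴|}, g₃ := n^{d_B(d_B−1)/2}Λ(n,d_B), and minima over probability distributions Q on 𝒮: (i) for all s^n∈𝒮^n, Tr[(I−T_X)ρ^{XYB}_{P_X,P_Y,s^n}] ≤ f·2^{nt(R̂₂ − min_Q I_{1−t}[Y;B|X]_{P_X,P_Y,Q})}; (ii) for every family {σ_{x^n}}_{x^n∈𝒳^n} of density matrices on H_B^{⊗n}, Tr[T_X · Σ_{x^n,y^n} P_X^n(x^n)P_Y^n(y^n)|x^n⟩⟨x^n|⊗|y^n⟩⟨y^n|⊗σ_{x^n}]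 ≤ g₁·2^{−nR̂₂}; (iii) for all s^n∈𝒮^n, Tr[(I−T_Y)ρ^{XYB}_{P_X,P_Y,s^n}] ≤ f·2^{nt(R̂₁ − min_Q I_{1−t}[X;B|Y]_{P_X,P_Y,Q})}; (iv) for every family {σ_{y^n}}_{y^n∈𝒴^n}, Tr[T_Y · Σ_{x^n,y^n} P_X^n(x^n)P_Y^n(y^n)|x^n⟩⟨x^n|⊗|y^n⟩⟨y^n|⊗σ_{y^n}] ≤ g₂·2^{−nR̂₁}; (v) for all s^n∈𝒮^n, Tr[(I−T₀)ρ^{XYB}_{P_X,P_Y,s^n}] ≤ f·2^{nt(R̂₁+R̂₂ − min_Q I_{1−t}[XY;B]_{P_X,P_Y,Q})}; (vi) for every density matrix σ on H_B^{⊗n}, Tr[T₀ · Σ_{x^n,y^n} P_X^n(x^n)P_Y^n(y^n)|x^n⟩⟨x^n|⊗|y^n⟩⟨y^n|⊗σ] ≤ g₃·2^{−n(R̂₁+R̂₂)}. -/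

import Mathlib

open scoped ComplexOrder

noncomputable section

/-- A density matrix: positive semidefinite with unit trace. -/
def IsDensity {m : Type*} [Fintype m] (ρ : Matrix m m ℂ) : Prop :=
  ρ.PosSemidef ∧ ρ.trace = 1

/-- Loewner order `A ⪯ B`. -/
def Loewner {m : Type*} [Fintype m] (A B : Matrix m m ℂ) : Prop :=
  (B - A).PosSemidef

/-- Functional calculus for Hermitian matrices (junk value `0` on non-Hermitian input). -/
def matFun {m : Type*} [Fintype m] [DecidableEq m] (f : ℝ → ℝ) (A : Matrix m m ℂ) :
    Matrix m m ℂ :=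
  if hA : A.IsHermitian then
    (hA.eigenvectorUnitary : Matrix m m ℂ) *
        Matrix.diagonal (fun i => (f (hA.eigenvalues i) : ℂ)) *
      star (hA.eigenvectorUnitary : Matrix m m ℂ)
  else 0

/-- Matrix power, taken on the support (`0^p := 0` on the kernel). -/
def mpow {m : Type*} [Fintype m] [DecidableEq m] (A : Matrix m m ℂ) (p : ℝ) :
    Matrix m m ℂ :=
  matFun (fun u => if u ≤ 0 then 0 else u ^ p) A

/-- The classical–classical–quantum state `Σ_{x,y} wX(x)wY(y)|x⟩⟨x|⊗|y⟩⟨y|⊗ρ_{x,y}`. -/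
def cqState2 {X Y B : Type*} [DecidableEq X] [DecidableEq Y]
    (wX : X → ℝ) (wY : Y → ℝ) (ρ : X → Y → Matrix B B ℂ) :
    Matrix ((X × Y) × B) ((X × Y) × B) ℂ :=
  Matrix.of fun p q =>
    (if p.1 = q.1 then ((wX p.1.1 * wY p.1.2 : ℝ) : ℂ) else 0) * ρ p.1.1 p.1.2 p.2 q.2

/-- Tensor product of a finite family of matrices, realized on functions. -/
def tensorFam {k d : Type*} [Fintype k] (ρ : k → Matrix d d ℂ) :
    Matrix (k → d) (k → d) ℂ :=
  Matrix.of fun i j => ∏ a, ρ a (i a) (j a)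

/-- The `n`-copy classical–classical–quantum state with i.i.d. classical inputs. -/
def cq2n {𝒳 𝒴 : Type*} [Fintype 𝒳] [DecidableEq 𝒳] [Fintype 𝒴] [DecidableEq 𝒴] {d : ℕ}
    (n : ℕ) (PX : 𝒳 → ℝ) (PY : 𝒴 → ℝ)
    (F : (Fin n → 𝒳) → (Fin n → 𝒴) → Matrix (Fin n → Fin d) (Fin n → Fin d) ℂ) :
    Matrix (((Fin n → 𝒳) × (Fin n → 𝒴)) × (Fin n → Fin d))
      (((Fin n → 𝒳) × (Fin n → 𝒴)) × (Fin n → Fin d)) ℂ :=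
  cqState2 (fun xv : Fin n → 𝒳 => ∏ k, PX (xv k)) (fun yv : Fin n → 𝒴 => ∏ k, PY (yv k)) F

/-- `Λ(n,d)`: the number of partitions of `n` into at most `d` parts. -/
def numPartLe (n d : ℕ) : ℕ := Nat.card {p : Nat.Partition n // p.parts.card ≤ d}

/-- The Rényi-type quantity `I_{1−t}[X;B|Y]_{P_X,P_Y,Q}`, given the mixed states `ρQ x y`. -/
def renyiXgY {𝒳 𝒴 : Type*} [Fintype 𝒳] [Fintype 𝒴] {d : ℕ}
    (PX : 𝒳 → ℝ) (PY : 𝒴 → ℝ) (ρQ : 𝒳 → 𝒴 → Matrix (Fin d) (Fin d) ℂ) (t : ℝ) : ℝ :=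
  -((1 - t) / t) * Real.logb 2
    (∑ y, PY y *
      (Matrix.trace (mpow (∑ x, PX x • mpow (ρQ x y) (1 - t)) (1 / (1 - t)))).re)

/-- The Rényi-type quantity `I_{1−t}[Y;B|X]_{P_X,P_Y,Q}`. -/
def renyiYgX {𝒳 𝒴 : Type*} [Fintype 𝒳] [Fintype 𝒴] {d : ℕ}
    (PX : 𝒳 → ℝ) (PY : 𝒴 → ℝ) (ρQ : 𝒳 → 𝒴 → Matrix (Fin d) (Fin d) ℂ) (t : ℝ) : ℝ :=
  -((1 - t) / t) * Real.logb 2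
    (∑ x, PX x *
      (Matrix.trace (mpow (∑ y, PY y • mpow (ρQ x y) (1 - t)) (1 / (1 - t)))).re)

/-- The Rényi-type quantity `I_{1−t}[XY;B]_{P_X,P_Y,Q}`. -/
def renyiXY {𝒳 𝒴 : Type*} [Fintype 𝒳] [Fintype 𝒴] {d : ℕ}
    (PX : 𝒳 → ℝ) (PY : 𝒴 → ℝ) (ρQ : 𝒳 → 𝒴 → Matrix (Fin d) (Fin d) ℂ) (t : ℝ) : ℝ :=
  -((1 - t) / t) * Real.logb 2
    (Matrix.trace (mpow (∑ x, ∑ y, (PX x * PY y) • mpow (ρQ x y) (1 - t))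
      (1 / (1 - t)))).re

/-- The polynomial factor `f`. -/
def fFac (n cardS cardX cardY d : ℕ) (t : ℝ) : ℝ :=
  ((n : ℝ) + 1) ^ (((cardS : ℝ) - 1)
    + t * (cardX : ℝ) * (cardY : ℝ) * ((d : ℝ) - 1) * (d : ℝ) / 2
    + ((d : ℝ) - 1) * t * (cardX : ℝ) * (cardY : ℝ))

/-- The polynomial factor `n^{c·d(d−1)/2}·Λ(n,d)^c`. -/
def gFac (n c d : ℕ) : ℝ :=
  (n : ℝ) ^ ((c : ℝ) * (d : ℝ) * ((d : ℝ) - 1) / 2) * (numPartLe n d : ℝ) ^ c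

/-- Probability distributions on a finite set `𝒮`. -/
abbrev ProbVec (𝒮 : Type*) [Fintype 𝒮] : Type _ :=
  {Q : 𝒮 → ℝ // (∀ s, 0 ≤ Q s) ∧ ∑ s, Q s = 1}

open scoped Matrix
set_option linter.unusedSectionVars false


section ResSec
variable {N : Type*} [Fintype N] [DecidableEq N]

/-- A finite orthogonal resolution of the identity. -/
structure Res {N J : Type*} [Fintype N] [DecidableEq N] [Fintype J]
    (p : J → Matrix N N ℂ) : Prop where
  herm : ∀ j, (p j).IsHermitian
  orth : ∀ j k, j ≠ k → p j * p k = 0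
  idem : ∀ j, p j * p j = p j
  sum : ∑ j, p j = 1

lemma psd_idem {q : Matrix N N ℂ} (h1 : q.IsHermitian) (h2 : q * q = q) : q.PosSemidef := by
  have := Matrix.posSemidef_conjTranspose_mul_self q
  rwa [h1.eq, h2] at this

namespace Res
variable {J : Type*} [Fintype J] {p : J → Matrix N N ℂ}

lemma psd (h : Res p) (j : J) : (p j).PosSemidef := psd_idem (h.herm j) (h.idem j)

lemma mul_sum_eq (h : Res p) (a : J → ℝ) (k : J) : p k * (∑ j, a j • p j) = a k • p k := by
  rw [Finset.mul_sum, Finset.sum_eq_single k]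
  · rw [mul_smul_comm, h.idem]
  · intro b _ hb
    rw [mul_smul_comm, h.orth k b hb.symm, smul_zero]
  · simp

lemma sum_mul_eq (h : Res p) (a : J → ℝ) (k : J) : (∑ j, a j • p j) * p k = a k • p k := by
  rw [Finset.sum_mul, Finset.sum_eq_single k]
  · rw [smul_mul_assoc, h.idem]
  · intro b _ hb
    rw [smul_mul_assoc, h.orth b k hb, smul_zero]
  · simp

lemma eq_sum (h : Res p) {A : Matrix N N ℂ} {a : J → ℝ} (hA : ∀ j, A * p j = a j • p j) :
    A = ∑ j, a j • p j := by
  calc A = A * ∑ j, p j := by rw [h.sum, mul_one]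
    _ = _ := by rw [Finset.mul_sum]; exact Finset.sum_congr rfl fun j _ => hA j

lemma sum_mul_sum (h : Res p) (a b : J → ℝ) :
    (∑ j, a j • p j) * (∑ j, b j • p j) = ∑ j, (a j * b j) • p j := by
  rw [Finset.sum_mul]
  refine Finset.sum_congr rfl fun j _ => ?_
  rw [smul_mul_assoc, h.mul_sum_eq, smul_smul]

lemma herm_sum (h : Res p) (a : J → ℝ) : (∑ j, a j • p j).IsHermitian := by
  unfold Matrix.IsHermitian
  rw [Matrix.conjTranspose_sum]
  refine Finset.sum_congr rfl fun j _ => ?_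
  rw [Matrix.conjTranspose_smul, (h.herm j).eq]; simp

lemma psd_sum (h : Res p) (a : J → ℝ) (ha : ∀ j, p j ≠ 0 → 0 ≤ a j) :
    (∑ j, a j • p j).PosSemidef := by
  refine Matrix.posSemidef_sum _ fun j _ => ?_
  by_cases hj : p j = 0
  · simp [hj, Matrix.PosSemidef.zero]
  · have := (h.psd j).smul (a := ((a j : ℝ) : ℂ)) (by exact_mod_cast ha j hj)
    convert this using 1
    ext i k; simp

lemma trace_sum (a : J → ℝ) :
    (Matrix.trace (∑ j, a j • p j)).re = ∑ j, a j * (p j).trace.re := by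
  rw [Matrix.trace_sum, Complex.re_sum]
  refine Finset.sum_congr rfl fun j _ => ?_
  rw [Matrix.trace_smul]; simp

lemma trace_nonneg (h : Res p) (j : J) : 0 ≤ (p j).trace.re :=
  (Complex.le_def.1 (h.psd j).trace_nonneg).1

lemma coeff_nonneg (h : Res p) (a : J → ℝ) (hA : (∑ j, a j • p j).PosSemidef) (j : J)
    (hj : p j ≠ 0) : 0 ≤ a j := by
  have h1 : ((p j)ᴴ * (∑ j, a j • p j) * p j).PosSemidef := hA.conjTranspose_mul_mul_same _
  rw [(h.herm j).eq, h.mul_sum_eq, smul_mul_assoc, h.idem] at h1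
  have h2 : 0 ≤ (Matrix.trace (a j • p j)) := h1.trace_nonneg
  rw [Matrix.trace_smul] at h2
  have h3 : 0 < (p j).trace.re := by
    refine lt_of_le_of_ne (h.trace_nonneg j) fun h0 => hj ?_
    have hz := (h.psd j).trace_nonneg
    rw [Complex.le_def] at hz
    exact (h.psd j).trace_eq_zero_iff.1 (Complex.ext h0.symm (by simpa using hz.2.symm))
  have h4 := (Complex.le_def.1 h2).1
  simp only [Complex.zero_re, Complex.real_smul, Complex.mul_re, Complex.ofReal_re,
    Complex.ofReal_im, zero_mul, sub_zero] at h4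
  exact nonneg_of_mul_nonneg_left h4 h3

/-- two resolutions of the same operator give the same functional calculus -/
lemma unique {K : Type*} [Fintype K] {q : K → Matrix N N ℂ} (h : Res p) (h' : Res q)
    (a : J → ℝ) (b : K → ℝ) (hab : ∑ j, a j • p j = ∑ k, b k • q k) (f : ℝ → ℝ) :
    ∑ j, f (a j) • p j = ∑ k, f (b k) • q k := by
  have key : ∀ j k, f (a j) • (p j * q k) = f (b k) • (p j * q k) := by
    intro j k
    by_cases hjk : a j = b k
    · rw [hjk]
    · have h1 : a j • (p j * q k) = b k • (p j * q k) := by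
        calc a j • (p j * q k) = (p j * (∑ j, a j • p j)) * q k := by
              rw [h.mul_sum_eq, smul_mul_assoc]
          _ = p j * ((∑ k, b k • q k) * q k) := by rw [hab, mul_assoc]
          _ = _ := by rw [h'.sum_mul_eq, mul_smul_comm]
      have h2 : (a j - b k) • (p j * q k) = 0 := by rw [sub_smul, h1, sub_self]
      rcases smul_eq_zero.1 h2 with h3 | h3
      · exact absurd (sub_eq_zero.1 h3) hjk
      · rw [h3]; simp
  calc ∑ j, f (a j) • p j = ∑ j, f (a j) • (p j * ∑ k, q k) := by rw [h'.sum]; simp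
    _ = ∑ j, ∑ k, f (b k) • (p j * q k) := by
        refine Finset.sum_congr rfl fun j _ => ?_
        rw [Finset.mul_sum, Finset.smul_sum]
        exact Finset.sum_congr rfl fun k _ => key j k
    _ = ∑ k, f (b k) • ((∑ j, p j) * q k) := by
        rw [Finset.sum_comm]
        refine Finset.sum_congr rfl fun k _ => ?_
        rw [Finset.sum_mul, Finset.smul_sum]
    _ = _ := by rw [h.sum]; simp

end Res

/-- the rank-one spectral resolution -/
lemma exists_res_eig {A : Matrix N N ℂ} (hA : A.IsHermitian) :
    ∃ p : N → Matrix N N ℂ, Res p ∧ A = ∑ j, hA.eigenvalues j • p j ∧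
      ∀ f : ℝ → ℝ, matFun f A = ∑ j, f (hA.eigenvalues j) • p j := by
  set U : Matrix N N ℂ := (hA.eigenvectorUnitary : Matrix N N ℂ) with hU
  have hUU : star U * U = 1 := Unitary.coe_star_mul_self _
  have hUU' : U * star U = 1 := Unitary.coe_mul_star_self _
  have hsum : ∀ c : N → ℝ, U * Matrix.diagonal (fun i => ((c i : ℝ) : ℂ)) * star U =
      ∑ j, c j • (U * Matrix.single j j 1 * star U) := by
    intro c
    have : Matrix.diagonal (fun i => ((c i : ℝ) : ℂ)) =
        ∑ j, c j • (Matrix.single j j 1 : Matrix N N ℂ) := by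
      ext i k
      simp only [Matrix.sum_apply, Matrix.smul_apply, Matrix.single_apply, Matrix.diagonal_apply]
      by_cases hik : i = k
      · subst hik; simp
      · simp only [hik, if_false]
        symm
        refine Finset.sum_eq_zero fun j _ => ?_
        rw [if_neg]; simp
        rintro ⟨rfl, h⟩; exact hik h
    rw [this, Finset.mul_sum, Finset.sum_mul]
    simp only [mul_smul_comm, smul_mul_assoc]
  refine ⟨fun j => U * Matrix.single j j 1 * star U, ⟨?_, ?_, ?_, ?_⟩, ?_, ?_⟩
  · intro j
    unfold Matrix.IsHermitian
    simp [Matrix.conjTranspose_mul, Matrix.star_eq_conjTranspose, mul_assoc]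
  · intro j k hjk
    calc _ = U * (Matrix.single j j 1 * (star U * U) * Matrix.single k k 1) * star U := by
          simp only [mul_assoc]
      _ = 0 := by rw [hUU, mul_one, Matrix.single_mul_single_of_ne _ _ _ _ hjk]; simp
  · intro j
    calc _ = U * (Matrix.single j j 1 * (star U * U) * Matrix.single j j 1) * star U := by
          simp only [mul_assoc]
      _ = _ := by rw [hUU, mul_one, Matrix.single_mul_single_same]; simp
  · have := hsum (fun _ => 1)
    simp only [one_smul, Complex.ofReal_one, Matrix.diagonal_one, mul_one, hUU'] at this
    exact this.symm
  · rw [← hsum]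
    conv_lhs => rw [hA.spectral_theorem]
    rfl
  · intro f
    rw [← hsum (fun i => f (hA.eigenvalues i)), matFun, dif_pos hA]

lemma Res.matFun_eq {J : Type*} [Fintype J] {p : J → Matrix N N ℂ} (h : Res p) (a : J → ℝ)
    (f : ℝ → ℝ) : matFun f (∑ j, a j • p j) = ∑ j, f (a j) • p j := by
  obtain ⟨q, hq, h1, h2⟩ := exists_res_eig (h.herm_sum a)
  rw [h2 f]
  exact hq.unique h _ _ h1.symm f

lemma matFun_mem_adjoin {A : Matrix N N ℂ} (hA : A.IsHermitian) (f : ℝ → ℝ) :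
    matFun f A ∈ Algebra.adjoin ℝ {A} := by
  obtain ⟨p, hp, h1, h2⟩ := exists_res_eig hA
  rw [h2 f]
  set s : Finset ℝ := Finset.univ.image hA.eigenvalues
  set P := Lagrange.interpolate s id f
  have hP : ∀ j, f (hA.eigenvalues j) = P.eval (hA.eigenvalues j) := by
    intro j
    have := Lagrange.eval_interpolate_at_node (s := s) (v := id) (i := hA.eigenvalues j) f
      (Function.injective_id.injOn) (by simp [s])
    exact this.symm
  have hpow : ∀ m : ℕ, A ^ m = ∑ j, (hA.eigenvalues j) ^ m • p j := by
    intro m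
    induction m with
    | zero => simp [hp.sum]
    | succ m ih =>
      rw [pow_succ, ih]
      nth_rw 2 [h1]
      rw [hp.sum_mul_sum]; simp [pow_succ]
  have : ∑ j, f (hA.eigenvalues j) • p j = Polynomial.aeval A P := by
    rw [Polynomial.aeval_eq_sum_range]
    simp_rw [hpow, hP, Polynomial.eval_eq_sum_range, Finset.smul_sum, Finset.sum_smul, smul_smul]
    rw [Finset.sum_comm]
  rw [this]
  exact Polynomial.aeval_mem_adjoin_singleton ℝ A

lemma commute_of_mem_adjoin {A B C : Matrix N N ℂ} (hAB : A * B = B * A)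
    (hC : C ∈ Algebra.adjoin ℝ {A}) : C * B = B * C := by
  have : Algebra.adjoin ℝ {A} ≤ Subalgebra.centralizer ℝ {B} := by
    rw [Algebra.adjoin_le_iff]
    rintro _ rfl
    simp only [Subalgebra.coe_centralizer, Set.mem_centralizer_iff, Set.mem_singleton_iff]
    rintro _ rfl; exact hAB.symm
  have h := this hC
  simp only [Subalgebra.mem_centralizer_iff, Set.mem_singleton_iff] at h
  exact (h B rfl).symm

lemma matFun_commute {A B : Matrix N N ℂ} (hA : A.IsHermitian) (hAB : A * B = B * A)
    (f : ℝ → ℝ) : matFun f A * B = B * matFun f A :=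
  commute_of_mem_adjoin hAB (matFun_mem_adjoin hA f)

/-- spectral resolution with projections in the algebra generated by `A` -/
lemma exists_res_adjoin {A : Matrix N N ℂ} (hA : A.IsHermitian) :
    ∃ (s : Finset ℝ) (p : s → Matrix N N ℂ), Res p ∧ (∀ j, A * p j = (j : ℝ) • p j) ∧
      ∀ j, p j ∈ Algebra.adjoin ℝ {A} := by
  classical
  obtain ⟨p, hp, h1, h2⟩ := exists_res_eig hA
  set s : Finset ℝ := Finset.univ.image hA.eigenvalues
  refine ⟨s, fun j => matFun (fun u => if u = (j : ℝ) then 1 else 0) A, ⟨?_, ?_, ?_, ?_⟩, ?_, ?_⟩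
  · intro j; rw [h2]; exact hp.herm_sum _
  · intro j k hjk
    rw [h2, h2, hp.sum_mul_sum]
    refine Finset.sum_eq_zero fun i _ => ?_
    have : (j : ℝ) ≠ k := fun h => hjk (Subtype.ext h)
    by_cases hi : hA.eigenvalues i = j
    · simp [hi, this]
    · simp [hi]
  · intro j
    rw [h2, hp.sum_mul_sum]
    refine Finset.sum_congr rfl fun i _ => ?_
    congr 1
    simp
  · simp_rw [h2]
    rw [Finset.sum_comm]
    conv_rhs => rw [← hp.sum]
    refine Finset.sum_congr rfl fun i _ => ?_
    rw [← Finset.sum_smul]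
    have : ∑ j : s, (if hA.eigenvalues i = (j : ℝ) then (1 : ℝ) else 0) = 1 := by
      rw [Finset.sum_eq_single ⟨hA.eigenvalues i, by simp [s]⟩]
      · simp
      · intro b _ hb
        rw [if_neg]; intro h; exact hb (Subtype.ext h.symm)
      · simp
    rw [this, one_smul]
  · intro j
    simp only [h2]
    nth_rw 1 [h1]
    rw [hp.sum_mul_sum, Finset.smul_sum]
    refine Finset.sum_congr rfl fun i _ => ?_
    rw [smul_smul]; congr 1
    by_cases hi : hA.eigenvalues i = j <;> simp [hi]
  · intro j; exact matFun_mem_adjoin hA _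

/-- refinement of two commuting resolutions -/
lemma Res.prod {J K : Type*} [Fintype J] [Fintype K] {p : J → Matrix N N ℂ}
    {q : K → Matrix N N ℂ} (hp : Res p) (hq : Res q) (hc : ∀ j k, p j * q k = q k * p j) :
    Res (fun jk : J × K => p jk.1 * q jk.2) := by
  have hmul : ∀ a b c e, p a * q b * (p c * q e) = (p a * p c) * (q b * q e) := by
    intro a b c e
    rw [mul_assoc, ← mul_assoc (q b), ← hc c b]; simp only [mul_assoc]
  refine ⟨?_, ?_, ?_, ?_⟩
  · rintro ⟨j, k⟩
    unfold Matrix.IsHermitian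
    simp only [Matrix.conjTranspose_mul, (hp.herm j).eq, (hq.herm k).eq]
    exact (hc j k).symm
  · rintro ⟨j, k⟩ ⟨j', k'⟩ h
    simp only [hmul]
    by_cases hj : j = j'
    · have : k ≠ k' := fun h' => h (by rw [hj, h'])
      rw [hq.orth _ _ this, mul_zero]
    · rw [hp.orth _ _ hj, zero_mul]
  · rintro ⟨j, k⟩
    simp only [hmul, hp.idem, hq.idem]
  · rw [Fintype.sum_prod_type]
    simp_rw [← Finset.mul_sum, hq.sum, mul_one]
    exact hp.sum

lemma exists_joint {A B : Matrix N N ℂ} (hA : A.IsHermitian) (hB : B.IsHermitian)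
    (hAB : A * B = B * A) : ∃ (J : Type) (_ : Fintype J) (p : J → Matrix N N ℂ) (a b : J → ℝ),
      Res p ∧ A = ∑ j, a j • p j ∧ B = ∑ j, b j • p j := by
  obtain ⟨s, p, hp, hpA, hpm⟩ := exists_res_adjoin hA
  obtain ⟨s', q, hq, hqB, hqm⟩ := exists_res_adjoin hB
  have h1 : ∀ j, p j * B = B * p j := fun j => commute_of_mem_adjoin hAB (hpm j)
  have hc : ∀ j k, p j * q k = q k * p j := fun j k =>
    (commute_of_mem_adjoin (h1 j).symm (hqm k)).symm
  have hr := hp.prod hq hc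
  refine ⟨s × s', inferInstance, _, fun j => j.1, fun j => j.2, hr, hr.eq_sum ?_, hr.eq_sum ?_⟩
  · intro j; rw [← mul_assoc, hpA, smul_mul_assoc]
  · intro j; show B * (p j.1 * q j.2) = _; rw [hc, ← mul_assoc, hqB, smul_mul_assoc]

end ResSec


section GT
variable {N : Type*} [Fintype N] [DecidableEq N] {G : Type*} [Group G] [Fintype G]

/-- the real algebra generated by the image of a subgroup -/
def grpAlg (π : G →* Matrix N N ℂ) (K : Subgroup G) : Submodule ℝ (Matrix N N ℂ) :=
  Submodule.span ℝ (π '' (K : Set G))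

lemma grpAlg_mem {π : G →* Matrix N N ℂ} {K : Subgroup G} {g : G} (hg : g ∈ K) :
    π g ∈ grpAlg π K := Submodule.subset_span ⟨g, hg, rfl⟩

lemma grpAlg_mono {π : G →* Matrix N N ℂ} {K L : Subgroup G} (h : K ≤ L) :
    grpAlg π K ≤ grpAlg π L := Submodule.span_mono (Set.image_mono h)

lemma grpAlg_mul {π : G →* Matrix N N ℂ} {K : Subgroup G} {x y : Matrix N N ℂ}
    (hx : x ∈ grpAlg π K) (hy : y ∈ grpAlg π K) : x * y ∈ grpAlg π K := by
  have := Submodule.mul_mem_mul hx hy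
  unfold grpAlg at this
  rw [Submodule.span_mul_span] at this
  refine Submodule.span_mono ?_ this
  rintro _ ⟨_, ⟨g, hg, rfl⟩, _, ⟨h, hh, rfl⟩, rfl⟩
  exact ⟨g * h, K.mul_mem hg hh, map_mul _ _ _⟩

lemma grpAlg_one {π : G →* Matrix N N ℂ} {K : Subgroup G} : (1 : Matrix N N ℂ) ∈ grpAlg π K := by
  rw [← map_one π]; exact grpAlg_mem K.one_mem

lemma grpAlg_commute {π : G →* Matrix N N ℂ} {K : Subgroup G} {x y : Matrix N N ℂ}
    (hx : x ∈ grpAlg π K) (hy : ∀ g ∈ K, π g * y = y * π g) : x * y = y * x := by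
  induction hx using Submodule.span_induction with
  | mem x h => obtain ⟨g, hg, rfl⟩ := h; exact hy g hg
  | zero => simp
  | add a b _ _ ha hb => rw [add_mul, mul_add, ha, hb]
  | smul c a _ ha => rw [smul_mul_assoc, mul_smul_comm, ha]

/-- sum of conjugates over a subgroup -/
def conjSum (π : G →* Matrix N N ℂ) (K : Subgroup G) (x : Matrix N N ℂ) : Matrix N N ℂ :=
  haveI := Classical.decPred (· ∈ K)
  ∑ h : K, π h * x * π (h : G)⁻¹

lemma pi_inv_mul (π : G →* Matrix N N ℂ) (g : G) : π g⁻¹ * π g = 1 := by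
  rw [← map_mul]; simp

lemma pi_mul_inv (π : G →* Matrix N N ℂ) (g : G) : π g * π g⁻¹ = 1 := by
  rw [← map_mul]; simp

lemma conjSum_comm (π : G →* Matrix N N ℂ) (K : Subgroup G) (x : Matrix N N ℂ) {g : G}
    (hg : g ∈ K) : π g * conjSum π K x = conjSum π K x * π g := by
  classical
  unfold conjSum
  rw [Finset.mul_sum, Finset.sum_mul]
  refine Fintype.sum_equiv (Equiv.mulLeft (⟨g, hg⟩ : K)) _ _ fun h => ?_
  simp only [Equiv.coe_mulLeft, Subgroup.coe_mul, map_mul, mul_inv_rev]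
  simp only [mul_assoc, pi_inv_mul, mul_one]

lemma conjSum_add (π : G →* Matrix N N ℂ) (K : Subgroup G) (x y : Matrix N N ℂ) :
    conjSum π K (x + y) = conjSum π K x + conjSum π K y := by
  unfold conjSum
  rw [← Finset.sum_add_distrib]
  exact Finset.sum_congr rfl fun h _ => by rw [mul_add, add_mul]

lemma conjSum_smul (π : G →* Matrix N N ℂ) (K : Subgroup G) (c : ℝ) (x : Matrix N N ℂ) :
    conjSum π K (c • x) = c • conjSum π K x := by
  unfold conjSum
  rw [Finset.smul_sum]
  exact Finset.sum_congr rfl fun h _ => by rw [mul_smul_comm, smul_mul_assoc]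

lemma conjSum_zero (π : G →* Matrix N N ℂ) (K : Subgroup G) :
    conjSum π K 0 = 0 := by simp [conjSum]

lemma conjSum_of_comm (π : G →* Matrix N N ℂ) (K : Subgroup G) (x : Matrix N N ℂ)
    (hx : ∀ g ∈ K, π g * x = x * π g) : conjSum π K x = (Nat.card K : ℝ) • x := by
  classical
  unfold conjSum
  rw [Finset.sum_congr rfl (fun h _ => by
    rw [hx h.1 h.2, mul_assoc, pi_mul_inv, mul_one] : ∀ h ∈ _, _ = x)]
  simp [Nat.card_eq_fintype_card, Nat.cast_smul_eq_nsmul]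

lemma conjSum_mem (π : G →* Matrix N N ℂ) {K L : Subgroup G} (hKL : K ≤ L) {x : Matrix N N ℂ}
    (hx : x ∈ grpAlg π L) : conjSum π K x ∈ grpAlg π L :=
  Submodule.sum_mem _ fun h _ => grpAlg_mul (grpAlg_mul (grpAlg_mem (hKL h.2)) hx)
    (grpAlg_mem (L.inv_mem (hKL h.2)))

/-- Gelfand–Tsetlin style resolution for the subgroup `K` -/
structure GTRes (π : G →* Matrix N N ℂ) (K : Subgroup G) {J : Type} [Fintype J]
    (q : J → Matrix N N ℂ) : Prop where
  res : Res q
  mem : ∀ j, q j ∈ grpAlg π K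
  scal : ∀ j, ∀ x ∈ grpAlg π K, ∃ a : ℝ, q j * x * q j = a • q j

lemma scal_of {π : G →* Matrix N N ℂ} {K : Subgroup G} {q : Matrix N N ℂ}
    (h : ∀ g ∈ K, ∃ a : ℝ, q * π g * q = a • q) :
    ∀ x ∈ grpAlg π K, ∃ a : ℝ, q * x * q = a • q := by
  intro x hx
  induction hx using Submodule.span_induction with
  | mem x hx => obtain ⟨g, hg, rfl⟩ := hx; exact h g hg
  | zero => exact ⟨0, by simp⟩
  | add a b _ _ ha hb =>
    obtain ⟨r, hr⟩ := ha; obtain ⟨s, hs⟩ := hb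
    exact ⟨r + s, by rw [mul_add, add_mul, hr, hs, add_smul]⟩
  | smul c a _ ha =>
    obtain ⟨r, hr⟩ := ha
    exact ⟨c * r, by rw [mul_smul_comm, smul_mul_assoc, hr, smul_smul]⟩

/-- A commutative algebra of Hermitian matrices has, for every finite subset, a joint resolution. -/
lemma exists_res_family (𝒦 : Subalgebra ℝ (Matrix N N ℂ)) (hH : ∀ x ∈ 𝒦, x.IsHermitian)
    {I : Type*} (F : Finset I) (x : I → Matrix N N ℂ) (hx : ∀ i, x i ∈ 𝒦) :
    ∃ (J : Type) (_ : Fintype J) (p : J → Matrix N N ℂ), Res p ∧ (∀ j, p j ∈ 𝒦) ∧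
      ∀ i ∈ F, ∀ j, ∃ a : ℝ, x i * p j = a • p j := by
  classical
  have hcomm : ∀ u ∈ 𝒦, ∀ v ∈ 𝒦, u * v = v * u := by
    intro u hu v hv
    have := (hH _ (𝒦.mul_mem hu hv)).eq
    rw [Matrix.conjTranspose_mul, (hH u hu).eq, (hH v hv).eq] at this
    exact this.symm
  induction F using Finset.induction_on with
  | empty =>
    refine ⟨Unit, inferInstance, fun _ => 1, ⟨fun _ => Matrix.isHermitian_one, ?_, by simp, by simp⟩,
      fun _ => 𝒦.one_mem, by simp⟩
    intro j k h; exact absurd (Subsingleton.elim j k) h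
  | insert i F _ ih =>
    obtain ⟨J, _, p, hp, hpm, hpx⟩ := ih
    obtain ⟨s, q, hq, hqA, hqm⟩ := exists_res_adjoin (hH _ (hx i))
    have hqm' : ∀ k, q k ∈ 𝒦 := fun k =>
      (Algebra.adjoin_le (by simpa using hx i) : Algebra.adjoin ℝ {x i} ≤ 𝒦) (hqm k)
    let e : s ≃ Fin s.card := s.equivFin
    refine ⟨J × s, inferInstance, _, hp.prod hq fun j k => hcomm _ (hpm j) _ (hqm' k), ?_, ?_⟩
    · intro j; exact 𝒦.mul_mem (hpm _) (hqm' _)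
    · intro i' hi' j
      rcases Finset.mem_insert.1 hi' with rfl | hi'
      · refine ⟨j.2, ?_⟩
        rw [hcomm _ (hpm _) _ (hqm' _), ← mul_assoc, hqA, smul_mul_assoc]
      · obtain ⟨a, ha⟩ := hpx i' hi' j.1
        exact ⟨a, by rw [← mul_assoc, ha, smul_mul_assoc]⟩

lemma GTRes.step {π : G →* Matrix N N ℂ} (hπ : ∀ g, (π g)ᴴ = π g⁻¹) {K L : Subgroup G}
    (hKL : K ≤ L) (hconj : ∀ g ∈ L, ∃ a ∈ K, a * g * a⁻¹ = g⁻¹)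
    {J : Type} [Fintype J] {q : J → Matrix N N ℂ} (hq : GTRes π K q) :
    ∃ (J' : Type) (_ : Fintype J') (q' : J' → Matrix N N ℂ), GTRes π L q' := by
  classical
  -- conjugation sums are Hermitian
  have hherm : ∀ x ∈ grpAlg π L, (conjSum π K x).IsHermitian := by
    intro x hx
    induction hx using Submodule.span_induction with
    | mem x hx =>
      obtain ⟨g, hg, rfl⟩ := hx
      obtain ⟨a, ha, hag⟩ := hconj g hg
      unfold Matrix.IsHermitian conjSum
      rw [Matrix.conjTranspose_sum]
      refine Fintype.sum_equiv (Equiv.mulRight (⟨a, ha⟩ : K)) _ _ fun h => ?_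
      simp only [hπ, ← map_mul, Equiv.coe_mulRight, Subgroup.coe_mul]
      congr 1
      rw [show ((h : G) * g * (h : G)⁻¹)⁻¹ = h * g⁻¹ * (h : G)⁻¹ by group, ← hag]; group
    | zero => rw [conjSum_zero]; exact Matrix.isHermitian_zero
    | add a b _ _ ha hb => rw [conjSum_add]; exact ha.add hb
    | smul c a _ ha =>
      rw [conjSum_smul]; unfold Matrix.IsHermitian
      rw [Matrix.conjTranspose_smul, ha.eq]; simp
  let 𝒦 : Subalgebra ℝ (Matrix N N ℂ) :=
    { carrier := {x | x ∈ grpAlg π L ∧ ∀ g ∈ K, π g * x = x * π g}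
      mul_mem' := fun {x y} hx hy => ⟨grpAlg_mul hx.1 hy.1, fun g hg => by
        rw [← mul_assoc, hx.2 g hg, mul_assoc, hy.2 g hg, mul_assoc]⟩
      add_mem' := fun {x y} hx hy => ⟨Submodule.add_mem _ hx.1 hy.1, fun g hg => by
        rw [mul_add, add_mul, hx.2 g hg, hy.2 g hg]⟩
      algebraMap_mem' := fun r => ⟨by
        rw [Algebra.algebraMap_eq_smul_one]; exact Submodule.smul_mem _ _ grpAlg_one, fun g _ =>
        (Algebra.commutes r (π g)).symm⟩ }
  have hK : ∀ x ∈ 𝒦, x.IsHermitian := by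
    intro x hx
    have h1 := hherm x hx.1
    rw [conjSum_of_comm π K x hx.2] at h1
    have h0 : (Nat.card K : ℝ) ≠ 0 := by
      exact_mod_cast Nat.card_pos.ne'
    unfold Matrix.IsHermitian at h1 ⊢
    rw [Matrix.conjTranspose_smul] at h1
    simp only [star_trivial] at h1
    exact smul_right_injective _ h0 h1
  obtain ⟨J', _, p, hp, hpm, hpx⟩ := exists_res_family 𝒦 hK (Finset.univ : Finset L)
    (fun g => conjSum π K (π g)) (fun g => ⟨conjSum_mem π hKL (grpAlg_mem g.2),
      fun h hh => conjSum_comm π K _ hh⟩)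
  have hpc : ∀ x ∈ grpAlg π L, ∀ j, ∃ a : ℝ, conjSum π K x * p j = a • p j := by
    intro x hx j
    induction hx using Submodule.span_induction with
    | mem x hx => obtain ⟨g, hg, rfl⟩ := hx; exact hpx ⟨g, hg⟩ (Finset.mem_univ _) j
    | zero => exact ⟨0, by rw [conjSum_zero]; simp⟩
    | add a b _ _ ha hb =>
      obtain ⟨r, hr⟩ := ha; obtain ⟨s, hs⟩ := hb
      exact ⟨r + s, by rw [conjSum_add, add_mul, hr, hs, add_smul]⟩
    | smul c a _ ha =>
      obtain ⟨r, hr⟩ := ha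
      exact ⟨c * r, by rw [conjSum_smul, smul_mul_assoc, hr, smul_smul]⟩
  have hc : ∀ j k, q j * p k = p k * q j := fun j k => grpAlg_commute (hq.mem j) (hpm k).2
  refine ⟨J × J', inferInstance, _, ⟨hq.res.prod hp hc, ?_, ?_⟩⟩
  · intro j; exact grpAlg_mul (grpAlg_mono hKL (hq.mem _)) (hpm _).1
  · rintro ⟨i, j⟩
    refine scal_of ?_
    intro g hg
    simp only []
    by_cases hqi : q i = 0
    · exact ⟨0, by simp [hqi]⟩
    choose! α hα using fun (h : G) (hh : h ∈ K) => hq.scal i (π h) (grpAlg_mem hh)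
    have hα1 : α 1 = 1 := by
      have := hα 1 K.one_mem
      rw [map_one, mul_one, hq.res.idem] at this
      have h2 : (α 1 - 1) • q i = 0 := by rw [sub_smul, ← this, one_smul, sub_self]
      rcases smul_eq_zero.1 h2 with h3 | h3
      · linarith
      · exact absurd h3 hqi
    have hαinv : ∀ h ∈ K, q i * π h⁻¹ * q i = α h • q i := by
      intro h hh
      have := congrArg Matrix.conjTranspose (hα h hh)
      simp only [Matrix.conjTranspose_mul, hπ, (hq.res.herm i).eq, Matrix.conjTranspose_smul,
        star_trivial] at this
      rw [mul_assoc]; exact this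
    set y := conjSum π K (q i * π g * q i) with hy
    have hiL : q i ∈ grpAlg π L := grpAlg_mono hKL (hq.mem i)
    obtain ⟨b, hb⟩ := hpc (q i * π g * q i) (grpAlg_mul (grpAlg_mul hiL (grpAlg_mem hg)) hiL) j
    set c : ℝ := ∑ h : K, α h * α h with hcdef
    have hqy : q i * y * q i = c • (q i * π g * q i) := by
      rw [hy, hcdef, conjSum, Finset.mul_sum, Finset.sum_mul, Finset.sum_smul]
      refine Finset.sum_congr rfl fun h _ => ?_
      calc q i * (π h * (q i * π g * q i) * π (h : G)⁻¹) * q i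
          = (q i * π h * q i) * π g * (q i * π (h : G)⁻¹ * q i) := by simp only [mul_assoc]
        _ = _ := by rw [hα _ h.2, hαinv _ h.2, smul_mul_assoc, mul_smul_comm, smul_mul_assoc,
                      smul_smul]
    have hc0 : 0 < c := by
      have : α (1 : K) * α (1 : K) ≤ c :=
        Finset.single_le_sum (f := fun h : K => α h * α h) (fun h _ => mul_self_nonneg _)
          (Finset.mem_univ 1)
      simp only [Subgroup.coe_one, hα1] at this
      linarith
    refine ⟨c⁻¹ * b, ?_⟩
    have h1 : q i * p j * π g * (q i * p j) = p j * (q i * π g * q i) * p j := by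
      rw [hc]; simp only [mul_assoc]; rw [← hc]
    have h2 : q i * π g * q i = c⁻¹ • (q i * y * q i) := by
      rw [hqy, smul_smul, inv_mul_cancel₀ hc0.ne', one_smul]
    rw [h1, h2]
    calc p j * (c⁻¹ • (q i * y * q i)) * p j = c⁻¹ • (p j * q i * y * (q i * p j)) := by
          simp only [mul_smul_comm, smul_mul_assoc, mul_assoc]
      _ = c⁻¹ • (q i * p j * (y * p j) * q i) := by rw [hc]; simp only [mul_assoc]
      _ = c⁻¹ • b • (q i * (p j * p j) * q i) := by
          rw [hb]; simp only [mul_smul_comm, smul_mul_assoc, mul_assoc]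
      _ = _ := by
          rw [hp.idem, mul_assoc, ← hc, ← mul_assoc, hq.res.idem, smul_smul]

lemma GTRes.bot {π : G →* Matrix N N ℂ} : GTRes π ⊥ (fun _ : Unit => 1) := by
  refine ⟨⟨fun _ => Matrix.isHermitian_one, ?_, by simp, by simp⟩, fun _ => grpAlg_one, ?_⟩
  · intro j k h; exact absurd (Subsingleton.elim j k) h
  · intro _
    refine scal_of ?_
    intro g hg
    rw [Subgroup.mem_bot] at hg
    exact ⟨1, by simp [hg]⟩

lemma GTRes.chain {π : G →* Matrix N N ℂ} (hπ : ∀ g, (π g)ᴴ = π g⁻¹) (K : ℕ → Subgroup G)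
    (h0 : K 0 = ⊥) (hmono : ∀ k, K k ≤ K (k + 1))
    (hconj : ∀ k, ∀ g ∈ K (k + 1), ∃ a ∈ K k, a * g * a⁻¹ = g⁻¹) (k : ℕ) :
    ∃ (J : Type) (_ : Fintype J) (q : J → Matrix N N ℂ), GTRes π (K k) q := by
  induction k with
  | zero => rw [h0]; exact ⟨Unit, inferInstance, _, GTRes.bot⟩
  | succ k ih =>
    obtain ⟨J, _, q, hq⟩ := ih
    exact hq.step hπ (hmono k) (hconj k)

end GT


section Dom
variable {N : Type*} [Fintype N] [DecidableEq N] {G : Type*} [Group G] [Fintype G]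

lemma PSD_trace_mul_nonneg {A B : Matrix N N ℂ} (hA : A.PosSemidef) (hB : B.PosSemidef) :
    0 ≤ (A * B).trace.re := by
  obtain ⟨p, hp, h1, -⟩ := exists_res_eig hA.isHermitian
  rw [h1, Finset.sum_mul, Matrix.trace_sum, Complex.re_sum]
  refine Finset.sum_nonneg fun j _ => ?_
  have h2 : (p j * B).trace = ((p j)ᴴ * B * p j).trace := by
    rw [Matrix.trace_mul_comm ((p j)ᴴ * B), (hp.herm j).eq, ← mul_assoc, hp.idem]
  rw [smul_mul_assoc, Matrix.trace_smul, Complex.smul_re, h2]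
  exact smul_nonneg (hA.eigenvalues_nonneg j)
    (Complex.le_def.1 (hB.conjTranspose_mul_mul_same (p j)).trace_nonneg).1

lemma PSD_trace_nonneg {A : Matrix N N ℂ} (hA : A.PosSemidef) : 0 ≤ A.trace.re :=
  (Complex.le_def.1 hA.trace_nonneg).1

lemma PSD_smul {A : Matrix N N ℂ} (hA : A.PosSemidef) {c : ℝ} (hc : 0 ≤ c) :
    (c • A).PosSemidef := by
  have := hA.smul (a := ((c : ℝ) : ℂ)) (by exact_mod_cast hc)
  convert this using 1
  ext i k; simp

lemma trace_mul_le {A B C : Matrix N N ℂ} (hA : A.PosSemidef) (hBC : (C - B).PosSemidef) :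
    (A * B).trace.re ≤ (A * C).trace.re := by
  have := PSD_trace_mul_nonneg hA hBC
  rw [mul_sub, Matrix.trace_sub, Complex.sub_re] at this
  linarith

lemma PSD_le_trace {A : Matrix N N ℂ} (hA : A.PosSemidef) :
    (A.trace.re • (1 : Matrix N N ℂ) - A).PosSemidef := by
  obtain ⟨p, hp, h1, -⟩ := exists_res_eig hA.isHermitian
  have ht : A.trace.re = ∑ j, hA.isHermitian.eigenvalues j := by
    have := hA.isHermitian.trace_eq_sum_eigenvalues
    rw [this, Complex.re_sum]; simp
  have : A.trace.re • (1 : Matrix N N ℂ) - A =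
      ∑ j, (A.trace.re - hA.isHermitian.eigenvalues j) • p j := by
    simp_rw [sub_smul]
    rw [Finset.sum_sub_distrib, ← Finset.smul_sum, hp.sum, ← h1]
  rw [this]
  refine hp.psd_sum _ fun j _ => ?_
  rw [ht]
  have := Finset.single_le_sum (f := hA.isHermitian.eigenvalues)
    (fun i _ => hA.eigenvalues_nonneg i) (Finset.mem_univ j)
  linarith

/-- the Frobenius–Schur element `Σ_{h ∈ K} h²` -/
def sqSum (π : G →* Matrix N N ℂ) (K : Subgroup G) : Matrix N N ℂ :=
  haveI := Classical.decPred (· ∈ K)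
  ∑ h : K, π h * π h

lemma sqSum_comm (π : G →* Matrix N N ℂ) (K : Subgroup G) {g : G}
    (hg : g ∈ K) : π g * sqSum π K = sqSum π K * π g := by
  classical
  unfold sqSum
  rw [Finset.mul_sum, Finset.sum_mul]
  refine Fintype.sum_equiv (MulAut.conj (⟨g, hg⟩ : K)).toEquiv _ _ fun h => ?_
  simp only [MulEquiv.toEquiv_eq_coe, MulEquiv.coe_toEquiv, MulAut.conj_apply, Subgroup.coe_mul,
    ← map_mul]
  congr 1
  simp only [Subgroup.coe_inv]
  group

lemma sqSum_mem (π : G →* Matrix N N ℂ) (K : Subgroup G) : sqSum π K ∈ grpAlg π K :=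
  Submodule.sum_mem _ fun h _ => grpAlg_mul (grpAlg_mem h.2) (grpAlg_mem h.2)

lemma GTRes.offdiag {π : G →* Matrix N N ℂ} (hπ : ∀ g, (π g)ᴴ = π g⁻¹) {K : Subgroup G}
    [Fintype K]
    {J : Type} [Fintype J] {q : J → Matrix N N ℂ} (hq : GTRes π K q) {i k : J} (hik : i ≠ k) :
    ∑ h : K, q i * π h * q k * π h * q i = 0 := by
  classical
  by_cases h0 : ∀ h : K, q i * π h * q k = 0
  · exact Finset.sum_eq_zero fun h _ => by rw [h0 h]; simp
  push Not at h0
  obtain ⟨g, hg⟩ := h0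
  set w := q i * π g * q k with hw
  have hwm : w ∈ grpAlg π K := grpAlg_mul (grpAlg_mul (hq.mem i) (grpAlg_mem g.2)) (hq.mem k)
  have hws : wᴴ = q k * π (g : G)⁻¹ * q i := by
    rw [hw]; simp only [Matrix.conjTranspose_mul, hπ, (hq.res.herm _).eq, mul_assoc]
  have hwsm : wᴴ ∈ grpAlg π K := by
    rw [hws]
    exact grpAlg_mul (grpAlg_mul (hq.mem _) (grpAlg_mem (K.inv_mem g.2))) (hq.mem _)
  have hqw : q i * w = w := by rw [hw, ← mul_assoc, ← mul_assoc, hq.res.idem]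
  have hwq : w * q k = w := by rw [hw, mul_assoc, hq.res.idem]
  have hwsq : wᴴ * q i = wᴴ := by rw [hws, mul_assoc, hq.res.idem]
  have hqws : q k * wᴴ = wᴴ := by rw [hws, ← mul_assoc, ← mul_assoc, hq.res.idem]
  obtain ⟨c, hc⟩ := hq.scal i (w * wᴴ) (grpAlg_mul hwm hwsm)
  have hc' : w * wᴴ = c • q i := by
    calc w * wᴴ = (q i * w) * (wᴴ * q i) := by rw [hqw, hwsq]
      _ = q i * (w * wᴴ) * q i := by simp only [mul_assoc]
      _ = c • q i := hc
  have hc0 : c ≠ 0 := by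
    rintro rfl
    rw [zero_smul, Matrix.self_mul_conjTranspose_eq_zero] at hc'
    exact hg hc'
  -- every `q i x q k` is a real multiple of `w`
  have hmult : ∀ h : K, ∃ a : ℝ, q i * π h * q k = a • w := by
    intro h
    obtain ⟨b, hb⟩ := hq.scal k (wᴴ * π h) (grpAlg_mul hwsm (grpAlg_mem h.2))
    refine ⟨c⁻¹ * b, ?_⟩
    have h1 : c • (q i * π h * q k) = b • w := by
      calc c • (q i * π h * q k) = (c • q i) * π h * q k := by
            simp only [smul_mul_assoc]
        _ = w * (q k * (wᴴ * π h) * q k) := by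
            rw [← hc', ← mul_assoc, ← mul_assoc, ← mul_assoc, hwq]
        _ = b • w := by rw [hb, mul_smul_comm, hwq]
    rw [← smul_smul, ← h1, smul_smul, inv_mul_cancel₀ hc0, one_smul]
  choose a ha using hmult
  have ha' : ∀ h : K, q k * π h * q i = a h⁻¹ • wᴴ := by
    intro h
    have := congrArg Matrix.conjTranspose (ha h⁻¹)
    simp only [Matrix.conjTranspose_mul, hπ, (hq.res.herm _).eq, Matrix.conjTranspose_smul,
        star_trivial, Subgroup.coe_inv, inv_inv] at this
    rw [mul_assoc]; exact this
  have hterm : ∀ h : K, q i * π h * q k * π h * q i = (a h * a h⁻¹) • (w * wᴴ) := by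
    intro h
    calc q i * π h * q k * π h * q i = (q i * π h * q k) * (q k * π h * q i) := by
          conv_lhs => rw [← hq.res.idem k]
          simp only [mul_assoc]
      _ = _ := by rw [ha, ha', smul_mul_assoc, mul_smul_comm, smul_smul]
  have hz : (∑ h : K, a h * a h⁻¹) • (w * wᴴ * w) = 0 := by
    have h1 : q i * conjSum π K wᴴ * q k = 0 := by
      rw [grpAlg_commute (hq.mem i) (fun g hg => conjSum_comm π K _ hg), mul_assoc,
        hq.res.orth i k hik, mul_zero]
    rw [← h1, conjSum, Finset.mul_sum, Finset.sum_mul, Finset.sum_smul]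
    refine Finset.sum_congr (by congr!) fun h _ => ?_
    calc (a h * a h⁻¹) • (w * wᴴ * w) = (a h • w) * wᴴ * (a h⁻¹ • w) := by
          simp only [smul_mul_assoc, mul_smul_comm, smul_smul]
          congr 1; ring
      _ = (q i * π h * q k) * wᴴ * (q i * π (h : G)⁻¹ * q k) := by
          rw [ha h, ← Subgroup.coe_inv, ha h⁻¹]
      _ = q i * π h * (q k * wᴴ * q i) * π (h : G)⁻¹ * q k := by simp only [mul_assoc]
      _ = _ := by rw [hqws, hwsq]; simp only [mul_assoc]
  have hne : w * wᴴ * w ≠ 0 := by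
    rw [hc', smul_mul_assoc, hqw]
    exact smul_ne_zero hc0 hg
  have hz' := (smul_eq_zero.1 hz).resolve_right hne
  simp_rw [hterm]
  rw [← Finset.sum_smul, hz', zero_smul]

/-- Key domination: operators commuting with `K` are dominated by the Frobenius–Schur element. -/
lemma GTRes.dom {π : G →* Matrix N N ℂ} (hπ : ∀ g, (π g)ᴴ = π g⁻¹) {K : Subgroup G}
    {J : Type} [Fintype J] {q : J → Matrix N N ℂ} (hq : GTRes π K q) {M : Matrix N N ℂ}
    (hM : M.PosSemidef) (hMK : ∀ g ∈ K, π g * M = M * π g) :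
    ((M.trace.re / (Nat.card K : ℝ)) • sqSum π K - M).PosSemidef := by
  classical
  set m : ℝ := (Nat.card K : ℝ) with hm
  have hm0 : 0 < m := by rw [hm]; exact_mod_cast Nat.card_pos
  have hqM : ∀ i, q i * M = M * q i := fun i => grpAlg_commute (hq.mem i) hMK
  have key : ∀ i, ((M.trace.re / m) • (sqSum π K * q i) - M * q i).PosSemidef := by
    intro i
    by_cases hqi : q i = 0
    · simp [hqi, Matrix.PosSemidef.zero]
    choose! α hα using fun (h : G) (hh : h ∈ K) => hq.scal i (π h) (grpAlg_mem hh)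
    have hα1 : α 1 = 1 := by
      have := hα 1 K.one_mem
      rw [map_one, mul_one, hq.res.idem] at this
      have h2 : (α 1 - 1) • q i = 0 := by rw [sub_smul, ← this, one_smul, sub_self]
      rcases smul_eq_zero.1 h2 with h3 | h3
      · linarith
      · exact absurd h3 hqi
    have hαinv : ∀ h ∈ K, q i * π h⁻¹ * q i = α h • q i := by
      intro h hh
      have := congrArg Matrix.conjTranspose (hα h hh)
      simp only [Matrix.conjTranspose_mul, hπ, (hq.res.herm i).eq, Matrix.conjTranspose_smul,
        star_trivial] at this
      rw [mul_assoc]; exact this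
    set c : ℝ := ∑ h : K, α h * α h with hcdef
    have hc0 : 0 < c := by
      have : α (1 : K) * α (1 : K) ≤ c :=
        Finset.single_le_sum (f := fun h : K => α h * α h) (fun h _ => mul_self_nonneg _)
          (Finset.mem_univ 1)
      simp only [Subgroup.coe_one, hα1] at this
      linarith
    -- sqSum on q i
    have hE : sqSum π K * q i = c • q i := by
      have h1 : sqSum π K * q i = q i * sqSum π K * q i := by
        rw [grpAlg_commute (hq.mem i) (fun g hg => sqSum_comm π K hg), mul_assoc, hq.res.idem]
      rw [h1]
      have h2 : q i * sqSum π K * q i = ∑ k, ∑ h : K, q i * π h * q k * π h * q i := by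
        rw [Finset.sum_comm, sqSum, Finset.mul_sum, Finset.sum_mul]
        refine Finset.sum_congr (by congr!) fun h _ => ?_
        calc q i * (π h * π h) * q i = q i * π h * 1 * π h * q i := by simp only [mul_assoc, one_mul]
          _ = _ := by rw [← hq.res.sum, Finset.mul_sum, Finset.sum_mul, Finset.sum_mul]
      rw [h2, Finset.sum_eq_single i]
      · rw [hcdef, Finset.sum_smul]
        refine Finset.sum_congr rfl fun h _ => ?_
        calc q i * π h * q i * π h * q i = (q i * π h * q i) * (q i * π h * q i) := by
              conv_lhs => rw [mul_assoc (q i * π h), ← hq.res.idem i]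
              simp only [mul_assoc, hq.res.idem]
              rw [← mul_assoc (q i) (q i) (π h * q i), hq.res.idem]
          _ = _ := by rw [hα _ h.2, smul_mul_assoc, mul_smul_comm, smul_smul, hq.res.idem]
      · intro k _ hk; exact hq.offdiag hπ hk.symm
      · simp
    -- the central element Z
    set Z := conjSum π K (q i) with hZ
    have hZq : Z * q i = c • q i := by
      have h1 : Z * q i = q i * Z * q i := by
        rw [grpAlg_commute (hq.mem i) (fun g hg => conjSum_comm π K _ hg), mul_assoc, hq.res.idem]
      rw [h1, hZ, conjSum, Finset.mul_sum, Finset.sum_mul, hcdef, Finset.sum_smul]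
      refine Finset.sum_congr (by congr!) fun h _ => ?_
      calc q i * (π h * q i * π (h : G)⁻¹) * q i
          = (q i * π h * q i) * (q i * π (h : G)⁻¹ * q i) := by
            have h9 : (q i * π h * q i) * (q i * π (h : G)⁻¹ * q i) =
                q i * π h * (q i * q i) * π (h : G)⁻¹ * q i := by simp only [mul_assoc]
            rw [h9, hq.res.idem]
            simp only [mul_assoc]
        _ = _ := by rw [hα _ h.2, hαinv _ h.2, smul_mul_assoc, mul_smul_comm, smul_smul, hq.res.idem]
    have hZZ : Z * Z = c • Z := by
      conv_lhs => rw [hZ]; arg 2; rw [conjSum]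
      rw [Finset.mul_sum]
      conv_rhs => rw [hZ, conjSum, Finset.smul_sum]
      refine Finset.sum_congr rfl fun h _ => ?_
      calc conjSum π K (q i) * (π h * q i * π (h : G)⁻¹)
          = (conjSum π K (q i) * π h) * q i * π (h : G)⁻¹ := by simp only [mul_assoc]
        _ = π h * (Z * q i) * π (h : G)⁻¹ := by rw [← conjSum_comm π K _ h.2]; simp only [mul_assoc, hZ]
        _ = _ := by rw [hZq, mul_smul_comm, smul_mul_assoc]
    have hZh : Z.IsHermitian := by
      unfold Matrix.IsHermitian
      rw [hZ, conjSum, Matrix.conjTranspose_sum]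
      refine Finset.sum_congr rfl fun h _ => ?_
      simp only [Matrix.conjTranspose_mul, hπ, (hq.res.herm _).eq, inv_inv, mul_assoc]
    have hcZ : (c • (1 : Matrix N N ℂ) - Z).PosSemidef := by
      have h1 := Matrix.posSemidef_conjTranspose_mul_self (c • (1 : Matrix N N ℂ) - Z)
      have h2 : (c • (1 : Matrix N N ℂ) - Z)ᴴ * (c • (1 : Matrix N N ℂ) - Z) =
          c • (c • (1 : Matrix N N ℂ) - Z) := by
        rw [Matrix.conjTranspose_sub, hZh.eq, Matrix.conjTranspose_smul, Matrix.conjTranspose_one,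
          star_trivial, sub_mul, mul_sub, mul_sub, hZZ]
        simp only [smul_mul_assoc, mul_smul_comm, one_mul, mul_one, smul_sub, sub_self, sub_zero]
      rw [h2] at h1
      have := PSD_smul h1 (inv_nonneg.2 hc0.le)
      rwa [smul_smul, inv_mul_cancel₀ hc0.ne', one_smul] at this
    have htr : m * (M * q i).trace.re ≤ c * M.trace.re := by
      have h1 : (M * Z).trace.re = m * (M * q i).trace.re := by
        have h3 : ∀ h : K, (M * (π h * q i * π (h : G)⁻¹)).trace = (M * q i).trace := by
          intro h
          calc (M * (π h * q i * π (h : G)⁻¹)).trace = ((M * π h * q i) * π (h : G)⁻¹).trace := by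
                simp only [mul_assoc]
            _ = (π (h : G)⁻¹ * (M * π h * q i)).trace := Matrix.trace_mul_comm _ _
            _ = (π (h : G)⁻¹ * π h * (M * q i)).trace := by
                rw [← hMK _ h.2]; simp only [mul_assoc]
            _ = _ := by rw [pi_inv_mul, one_mul]
        rw [hZ, conjSum, Finset.mul_sum, Matrix.trace_sum, Finset.sum_congr rfl fun h _ => h3 h]
        rw [hm]; simp [Nat.card_eq_fintype_card]
      have h2 := trace_mul_le hM hcZ
      rw [h1, mul_smul_comm, mul_one, Matrix.trace_smul] at h2
      simpa using h2
    have hX : (M * q i).PosSemidef := by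
      have := hM.conjTranspose_mul_mul_same (q i)
      rwa [(hq.res.herm i).eq, hqM, mul_assoc, hq.res.idem] at this
    have h1 : ((M * q i).trace.re • q i - M * q i).PosSemidef := by
      have := (PSD_le_trace hX).conjTranspose_mul_mul_same (q i)
      rw [(hq.res.herm i).eq, mul_sub, sub_mul, mul_smul_comm, smul_mul_assoc, mul_one,
        hq.res.idem] at this
      rwa [← mul_assoc, hqM, mul_assoc, mul_assoc, hq.res.idem, hq.res.idem] at this
    have h2 : ((M.trace.re / m * c - (M * q i).trace.re) • q i).PosSemidef := by
      refine PSD_smul (hq.res.psd i) ?_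
      rw [sub_nonneg, div_mul_eq_mul_div, le_div_iff₀ hm0]
      linarith
    have := h2.add h1
    rw [hE, smul_smul]
    convert this using 1
    rw [sub_smul]; abel
  have hsum : (M.trace.re / m) • sqSum π K - M =
      ∑ i, ((M.trace.re / m) • (sqSum π K * q i) - M * q i) := by
    rw [Finset.sum_sub_distrib, ← Finset.smul_sum, ← Finset.mul_sum, ← Finset.mul_sum, hq.res.sum,
      mul_one, mul_one]
  rw [hsum]
  exact Matrix.posSemidef_sum _ fun i _ => key i

end Dom


section PermRep

lemma zpow_sub_eq {α : Type*} (g : Equiv.Perm α) {i j : ℤ} {r : α} (h : (g ^ i) r = (g ^ j) r) :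
    (g ^ (-i)) r = (g ^ (-j)) r := by
  have h1 : (g ^ (-i - j)) ((g ^ i) r) = (g ^ (-i - j)) ((g ^ j) r) := by rw [h]
  rw [← Equiv.Perm.mul_apply, ← Equiv.Perm.mul_apply, ← zpow_add, ← zpow_add] at h1
  rw [show -i - j + i = -j by ring, show -i - j + j = -i by ring] at h1
  exact h1.symm

lemma exists_inv_conj {α : Type*} (g : Equiv.Perm α) (k : α) :
    ∃ a : Equiv.Perm α, a * g * a⁻¹ = g⁻¹ ∧ a k = k ∧ ∀ p, ∃ i : ℤ, a p = (g ^ i) p := by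
  classical
  let S := Equiv.Perm.SameCycle.setoid g
  let r : α → α := fun p => if g.SameCycle k p then k else (Quotient.out (Quotient.mk S p))
  have hr1 : ∀ p, g.SameCycle (r p) p := by
    intro p
    by_cases h : g.SameCycle k p
    · simp only [r, if_pos h]; exact h
    · simp only [r, if_neg h]
      exact Quotient.mk_out (s := S) p
  have hr2 : ∀ p q, g.SameCycle p q → r p = r q := by
    intro p q h
    by_cases h' : g.SameCycle k p
    · simp only [r, if_pos h', if_pos (h'.trans h)]
    · have : ¬ g.SameCycle k q := fun h'' => h' (h''.trans h.symm)
      simp only [r, if_neg h', if_neg this]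
      congr 1
      exact Quotient.sound (s := S) h
  choose i hi using hr1
  let a : α → α := fun p => (g ^ (-i p)) (r p)
  have ha : ∀ p (j : ℤ), (g ^ j) (r p) = p → a p = (g ^ (-j)) (r p) := by
    intro p j hj
    exact zpow_sub_eq g ((hi p).trans hj.symm)
  have hsc : ∀ p, g.SameCycle p (a p) := by
    intro p
    refine Equiv.Perm.SameCycle.trans (y := r p) ?_ ⟨_, rfl⟩
    exact Equiv.Perm.SameCycle.symm ⟨i p, hi p⟩
  have hinv : Function.Involutive a := by
    intro p
    have h1 : r (a p) = r p := hr2 _ _ (hsc p).symm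
    have h2 := ha (a p) (-i p) (by rw [h1])
    rw [h2, h1, neg_neg, hi]
  refine ⟨hinv.toPerm, ?_, ?_, fun p => ?_⟩
  · rw [mul_inv_eq_iff_eq_mul]
    ext p
    simp only [Equiv.Perm.mul_apply, Function.Involutive.coe_toPerm]
    have h1 : r (g p) = r p := hr2 _ _ (Equiv.Perm.sameCycle_apply_left.2 (Equiv.Perm.SameCycle.refl _ _))
    have h2 := ha (g p) (1 + i p) (by rw [h1, zpow_add, zpow_one, Equiv.Perm.mul_apply, hi])
    rw [h2, h1]
    show _ = g⁻¹ ((g ^ (-i p)) (r p))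
    rw [← Equiv.Perm.mul_apply, neg_add, zpow_add, zpow_neg_one]
  · show a k = k
    have h1 : r k = k := by simp only [r, if_pos (Equiv.Perm.SameCycle.refl g k)]
    have := ha k 0 (by simp [h1])
    simpa [h1] using this
  · obtain ⟨j, hj⟩ := hsc p
    exact ⟨j, hj.symm⟩

/-- stabilizer of a word -/
def wstab {α β : Type*} (z : α → β) : Subgroup (Equiv.Perm α) where
  carrier := {g | z ∘ g = z}
  mul_mem' := by
    intro a b ha hb
    simp only [Set.mem_ofPred_eq] at *
    rw [Equiv.Perm.coe_mul, ← Function.comp_assoc, ha, hb]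
  one_mem' := by simp
  inv_mem' := by
    intro a ha
    simp only [Set.mem_ofPred_eq] at *
    conv_lhs => rw [← ha]
    ext p; simp

lemma mem_wstab {α β : Type*} {z : α → β} {g : Equiv.Perm α} : g ∈ wstab z ↔ z ∘ g = z := Iff.rfl

variable {n : ℕ} {D : Type*} [Fintype D] [DecidableEq D]

/-- the permutation representation on `(Fin n → D)` -/
def prep (n : ℕ) (D : Type*) [Fintype D] [DecidableEq D] :
    Equiv.Perm (Fin n) →* Matrix (Fin n → D) (Fin n → D) ℂ where
  toFun g := Matrix.of fun i j => if i ∘ g = j then 1 else 0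
  map_one' := by
    ext i j
    simp [Matrix.one_apply]
  map_mul' g h := by
    ext i j
    rw [Matrix.mul_apply, Finset.sum_eq_single (i ∘ g)]
    · simp [Function.comp_assoc]
      congr
    · intro b _ hb
      simp [hb.symm]
    · simp

lemma prep_apply (g : Equiv.Perm (Fin n)) (i j : Fin n → D) :
    prep n D g i j = if i ∘ g = j then 1 else 0 := rfl

lemma comp_eq_iff_inv {g : Equiv.Perm (Fin n)} {i j : Fin n → D} :
    i ∘ g = j ↔ i = j ∘ (g⁻¹ : Equiv.Perm (Fin n)) := by
  constructor
  · rintro rfl; ext; simp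
  · rintro rfl; ext; simp

lemma prep_star (g : Equiv.Perm (Fin n)) : (prep n D g)ᴴ = prep n D g⁻¹ := by
  ext i j
  rw [Matrix.conjTranspose_apply, prep_apply, prep_apply]
  simp only [comp_eq_iff_inv (g := g)]
  by_cases h : j = i ∘ (g⁻¹ : Equiv.Perm (Fin n))
  · simp [h]
  · rw [if_neg h, if_neg (Ne.symm h), star_zero]

lemma prep_mul (g : Equiv.Perm (Fin n)) (A : Matrix (Fin n → D) (Fin n → D) ℂ) (i j) :
    (prep n D g * A) i j = A (i ∘ g) j := by
  simp [Matrix.mul_apply, prep_apply]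

lemma mul_prep (g : Equiv.Perm (Fin n)) (A : Matrix (Fin n → D) (Fin n → D) ℂ) (i j) :
    (A * prep n D g) i j = A i (j ∘ (g⁻¹ : Equiv.Perm (Fin n))) := by
  simp [Matrix.mul_apply, prep_apply, comp_eq_iff_inv]

lemma prep_conj (g : Equiv.Perm (Fin n)) (A : Matrix (Fin n → D) (Fin n → D) ℂ) (i j) :
    (prep n D g * A * prep n D g⁻¹) i j = A (i ∘ g) (j ∘ g) := by
  rw [mul_prep, prep_mul, inv_inv]

lemma prep_conj_tensor (g : Equiv.Perm (Fin n)) (ρ : Fin n → Matrix D D ℂ) :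
    prep n D g * tensorFam ρ * prep n D g⁻¹ = tensorFam (ρ ∘ (g⁻¹ : Equiv.Perm (Fin n))) := by
  ext i j
  rw [prep_conj]
  simp only [tensorFam, Matrix.of_apply]
  refine Fintype.prod_equiv g _ _ fun k => ?_
  simp

lemma prep_comm_tensor {β : Type*} {z : Fin n → β} (ρ : β → Matrix D D ℂ) {g : Equiv.Perm (Fin n)}
    (hg : g ∈ wstab z) : prep n D g * tensorFam (fun k => ρ (z k)) =
      tensorFam (fun k => ρ (z k)) * prep n D g := by
  have h := prep_conj_tensor (D := D) g (fun k => ρ (z k))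
  have h2 : (fun k => ρ (z k)) ∘ (g⁻¹ : Equiv.Perm (Fin n)) = fun k => ρ (z k) := by
    have := (wstab z).inv_mem hg
    ext1 k
    exact congrArg ρ (congrFun this k)
  rw [h2] at h
  have h3 := congrArg (· * prep n D g) h
  simp only [mul_assoc, pi_inv_mul, mul_one] at h3
  exact h3

/-- the universal dominating operator -/
def Ez (D : Type*) [Fintype D] [DecidableEq D] {β : Type*} (z : Fin n → β) :
    Matrix (Fin n → D) (Fin n → D) ℂ :=
  ((Nat.card (wstab z) : ℝ)⁻¹) • sqSum (prep n D) (wstab z)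

lemma exists_GTRes_wstab {β : Type*} (z : Fin n → β) :
    ∃ (J : Type) (_ : Fintype J) (q : J → Matrix (Fin n → D) (Fin n → D) ℂ),
      GTRes (prep n D) (wstab z) q := by
  let K : ℕ → Subgroup (Equiv.Perm (Fin n)) := fun k =>
    { carrier := {g | g ∈ wstab z ∧ ∀ j : Fin n, k ≤ j → g j = j}
      mul_mem' := by
        rintro a b ⟨ha, ha'⟩ ⟨hb, hb'⟩
        refine ⟨(wstab z).mul_mem ha hb, fun j hj => ?_⟩
        rw [Equiv.Perm.mul_apply, hb' j hj, ha' j hj]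
      one_mem' := ⟨(wstab z).one_mem, fun j _ => rfl⟩
      inv_mem' := by
        rintro a ⟨ha, ha'⟩
        refine ⟨(wstab z).inv_mem ha, fun j hj => ?_⟩
        rw [Equiv.Perm.inv_eq_iff_eq, ha' j hj] }
  have hK : ∀ k g, g ∈ K k ↔ g ∈ wstab z ∧ ∀ j : Fin n, k ≤ j → g j = j := fun k g => Iff.rfl
  have h0 : K 0 = ⊥ := by
    rw [eq_bot_iff]
    intro g hg
    rw [Subgroup.mem_bot]
    ext j
    rw [((hK _ _).1 hg).2 j (Nat.zero_le _)]; rfl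
  have hn : K n = wstab z := by
    ext g
    rw [hK]
    exact ⟨fun h => h.1, fun h => ⟨h, fun j hj => absurd j.2 (by omega)⟩⟩
  have := GTRes.chain (π := prep n D) (prep_star) K h0
    (fun k g hg => ⟨hg.1, fun j hj => hg.2 j (by omega)⟩) ?_ n
  · rwa [hn] at this
  intro k g hg
  have hg' := (hK _ _).1 hg
  by_cases hn0 : n = 0
  · subst hn0
    exact ⟨1, (K k).one_mem, Subsingleton.elim _ _⟩
  obtain ⟨a, h1, h2, h3⟩ := exists_inv_conj g (if h : k < n then ⟨k, h⟩ else ⟨0, by omega⟩)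
  refine ⟨a, (hK _ _).2 ⟨?_, fun j hj => ?_⟩, h1⟩
  · rw [mem_wstab]
    ext p
    obtain ⟨i, hi⟩ := h3 p
    rw [Function.comp_apply, hi]
    exact congrFun (mem_wstab.1 ((wstab z).zpow_mem hg'.1 i)) p
  · rcases eq_or_lt_of_le hj with h | h
    · have hkn : k < n := h ▸ j.2
      rw [dif_pos hkn] at h2
      have : j = ⟨k, hkn⟩ := Fin.ext h.symm
      rw [this]; exact h2
    · obtain ⟨i, hi⟩ := h3 j
      have hfix := hg'.2 j h
      rw [hi]
      exact Equiv.Perm.zpow_apply_eq_self_of_apply_eq_self hfix i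

lemma Ez_dom {β : Type*} (z : Fin n → β) {M : Matrix (Fin n → D) (Fin n → D) ℂ}
    (hM : M.PosSemidef) (hMK : ∀ g ∈ wstab z, prep n D g * M = M * prep n D g) :
    (M.trace.re • Ez D z - M).PosSemidef := by
  obtain ⟨J, _, q, hq⟩ := exists_GTRes_wstab (D := D) z
  have := hq.dom prep_star hM hMK
  rwa [Ez, smul_smul, ← div_eq_mul_inv]

lemma Ez_mem {β : Type*} (z : Fin n → β) : Ez D z ∈ grpAlg (prep n D) (wstab z) :=
  Submodule.smul_mem _ _ (sqSum_mem _ _)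

lemma Ez_comm {β : Type*} (z : Fin n → β) {g : Equiv.Perm (Fin n)} (hg : g ∈ wstab z) :
    prep n D g * Ez D z = Ez D z * prep n D g := by
  rw [Ez, mul_smul_comm, smul_mul_assoc, sqSum_comm _ _ hg]

lemma Ez_commute {β γ : Type*} (z : Fin n → β) (w : Fin n → γ) (h : wstab z ≤ wstab w) :
    Ez D z * Ez D w = Ez D w * Ez D z :=
  grpAlg_commute (Ez_mem z) fun _ hg => Ez_comm w (h hg)

lemma PSD_add_left {N : Type*} [Fintype N] {A B : Matrix N N ℂ} (hB : B.PosSemidef)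
    (h : (A - B).PosSemidef) : A.PosSemidef := by
  have := h.add hB
  rwa [sub_add_cancel] at this

lemma Ez_psd {β : Type*} (z : Fin n → β) : (Ez D z).PosSemidef := by
  by_cases hD : Nonempty (Fin n → D)
  · have h1 := Ez_dom (D := D) z Matrix.PosSemidef.one (fun g _ => by simp)
    have h2 := PSD_add_left Matrix.PosSemidef.one h1
    have ht : 0 < ((1 : Matrix (Fin n → D) (Fin n → D) ℂ).trace).re := by
      rw [Matrix.trace_one]
      simp only [Complex.natCast_re]
      exact_mod_cast Fintype.card_pos
    have h3 := PSD_smul h2 (inv_nonneg.2 ht.le)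
    rwa [smul_smul, inv_mul_cancel₀ ht.ne', one_smul] at h3
  · rw [not_nonempty_iff] at hD
    have : Ez D z = 0 := by ext i; exact hD.elim i
    rw [this]; exact Matrix.PosSemidef.zero

lemma wstab_conj {β : Type*} (z : Fin n → β) (g h : Equiv.Perm (Fin n)) :
    h ∈ wstab z ↔ g * h * g⁻¹ ∈ wstab (z ∘ (g⁻¹ : Equiv.Perm (Fin n))) := by
  rw [mem_wstab, mem_wstab]
  constructor
  · intro hh
    ext p
    have := congrFun hh (g⁻¹ p)
    simpa using this
  · intro hh
    ext p
    have := congrFun hh (g p)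
    simpa using this

lemma Ez_conj {β : Type*} (z : Fin n → β) (g : Equiv.Perm (Fin n)) :
    prep n D g * Ez D z * prep n D g⁻¹ = Ez D (z ∘ (g⁻¹ : Equiv.Perm (Fin n))) := by
  classical
  let e : wstab z ≃ wstab (z ∘ (g⁻¹ : Equiv.Perm (Fin n))) :=
    (MulAut.conj g).toEquiv.subtypeEquiv (fun h => wstab_conj z g h)
  have hcard : Nat.card (wstab z) = Nat.card (wstab (z ∘ (g⁻¹ : Equiv.Perm (Fin n)))) :=
    Nat.card_congr e
  rw [Ez, Ez, ← hcard, mul_smul_comm, smul_mul_assoc]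
  congr 1
  unfold sqSum
  rw [Finset.mul_sum, Finset.sum_mul]
  refine Fintype.sum_equiv e _ _ fun h => ?_
  show _ = prep n D (g * h * g⁻¹) * prep n D (g * h * g⁻¹)
  simp only [← map_mul]
  congr 1
  group

end PermRep


section Count

/-- the type of a word -/
def wtype {α C : Type*} [Fintype α] [DecidableEq C] (f : α → C) : C → ℕ :=
  fun c => (Finset.univ.filter (fun k => f k = c)).card

lemma exists_perm_of_wtype {α C : Type*} [Fintype α] [DecidableEq C] (f g : α → C)
    (h : wtype f = wtype g) : ∃ τ : Equiv.Perm α, f = g ∘ τ := by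
  classical
  have h1 : ∀ c, Nonempty ({k // f k = c} ≃ {k // g k = c}) := by
    intro c
    rw [← Fintype.card_eq, Fintype.card_subtype, Fintype.card_subtype]
    exact congrFun h c
  let e' : ∀ c, {k // f k = c} ≃ {k // g k = c} := fun c => Classical.choice (h1 c)
  refine ⟨(Equiv.sigmaFiberEquiv f).symm.trans ((Equiv.sigmaCongrRight e').trans
    (Equiv.sigmaFiberEquiv g)), ?_⟩
  ext k
  simp only [Function.comp_apply, Equiv.trans_apply]
  exact ((e' (f k)) ⟨k, rfl⟩).2.symm

lemma wtype_comp {α C : Type*} [Fintype α] [DecidableEq C] (f : α → C) (τ : Equiv.Perm α) :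
    wtype (f ∘ τ) = wtype f := by
  funext c
  unfold wtype
  refine Finset.card_bij (fun k _ => τ k) ?_ ?_ ?_
  · intro k hk; simpa using hk
  · intro a _ b _ hab; exact τ.injective hab
  · intro b hb; exact ⟨τ.symm b, by simpa using hb, by simp⟩

lemma wtype_sum {α C : Type*} [Fintype α] [Fintype C] [DecidableEq C] (f : α → C) :
    ∑ c, wtype f c = Fintype.card α := by
  unfold wtype
  rw [← Finset.card_eq_sum_card_fiberwise (fun k _ => Finset.mem_univ (f k))]
  rfl

variable {n : ℕ} {D : Type*} [Fintype D] [DecidableEq D]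

/-- symmetric matrices of natural numbers of total `m` -/
def symS (D : Type*) [Fintype D] [DecidableEq D] (m : ℕ) : Finset (D × D → ℕ) :=
  ((Finset.univ : Finset (D × D)).piAntidiag m).filter (fun T => ∀ a b, T (a, b) = T (b, a))

lemma mem_symS {m : ℕ} {T : D × D → ℕ} :
    T ∈ symS D m ↔ ∑ c, T c = m ∧ ∀ a b, T (a, b) = T (b, a) := by
  simp [symS, Finset.mem_piAntidiag]

lemma symS_mono [Nonempty D] {m m' : ℕ} (h : m ≤ m') : (symS D m).card ≤ (symS D m').card := by
  obtain ⟨d0⟩ := ‹Nonempty D›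
  refine Finset.card_le_card_of_injOn (fun T c => T c + if c = (d0, d0) then m' - m else 0) ?_ ?_
  · intro T hT
    rw [Finset.mem_coe, mem_symS] at *
    refine ⟨?_, fun a b => ?_⟩
    · rw [Finset.sum_add_distrib, hT.1]; simp; omega
    · simp only [hT.2 a b, Prod.mk.injEq]
      congr 1
      simp only [and_comm]
  · intro T _ T' _ hTT
    funext c
    exact Nat.add_right_cancel (congrFun hTT c)

lemma count_bound {β : Type*} [Fintype β] [DecidableEq β] (z : Fin n → β) :
    Nat.card {x : wstab z × (Fin n → D) // x.2 ∘ (x.1 : Equiv.Perm (Fin n)) ∘ (x.1 : Equiv.Perm (Fin n)) = x.2} ≤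
      (∏ b, (symS D (wtype z b)).card) * Nat.card (wstab z) := by
  classical
  let Ω := {x : wstab z × (Fin n → D) // x.2 ∘ (x.1 : Equiv.Perm (Fin n)) ∘ (x.1 : Equiv.Perm (Fin n)) = x.2}
  let w : Ω → Fin n → D × D := fun x k => (x.1.2 k, x.1.2 ((x.1.1 : Equiv.Perm (Fin n)) k))
  have hw : ∀ x : Ω, ∀ k, w x ((x.1.1 : Equiv.Perm (Fin n)) k) = (w x k).swap := by
    intro x k
    simp only [w, Prod.swap_prod_mk, Prod.mk.injEq, true_and]
    exact congrFun x.2 k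
  let f : (Fin n → D × D) → Fin n → β × (D × D) := fun w k => (z k, w k)
  let TT : Set (β × (D × D) → ℕ) := Set.range (fun w => wtype (f w))
  choose w0 hw0 using fun T : TT => T.2
  let T : (Fin n → D × D) → TT := fun w => ⟨wtype (f w), w, rfl⟩
  have hτ : ∀ w, ∃ τ : Equiv.Perm (Fin n), f w = f (w0 (T w)) ∘ τ := by
    intro w
    exact exists_perm_of_wtype _ _ (hw0 (T w)).symm
  choose τ hτ using hτ
  have hτz : ∀ w, τ w ∈ wstab z := by
    intro w
    rw [mem_wstab]
    ext k
    exact (congrArg Prod.fst (congrFun (hτ w) k)).symm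
  have hτw : ∀ w k, w k = w0 (T w) (τ w k) := fun w k => congrArg Prod.snd (congrFun (hτ w) k)
  let P : Finset (β → D × D → ℕ) := Fintype.piFinset (fun b => symS D (wtype z b))
  have hP : ∀ x : Ω, (fun b c => (T (w x)).1 (b, c)) ∈ P := by
    intro x
    rw [Fintype.mem_piFinset]
    intro b
    rw [mem_symS]
    constructor
    · simp only [T, wtype, f, Prod.mk.injEq]
      rw [Finset.card_eq_sum_card_fiberwise (f := w x) (s := Finset.univ.filter (fun k => z k = b))
          (t := Finset.univ) (fun k _ => Finset.mem_univ _)]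
      simp only [Finset.filter_filter]
    · intro a c
      have : wtype (f (w x)) (b, (a, c)) = wtype (f (w x) ∘ (x.1.1 : Equiv.Perm (Fin n))) (b, (a, c)) := by
        rw [wtype_comp]
      show wtype (f (w x)) (b, (a, c)) = wtype (f (w x)) (b, (c, a))
      rw [this]
      unfold wtype
      congr 1
      ext k
      have h1 : z ((x.1.1 : Equiv.Perm (Fin n)) k) = z k := congrFun x.1.1.2 k
      simp only [Finset.mem_filter, Finset.mem_univ, true_and, f, Function.comp_apply, Prod.mk.injEq,
        h1, hw]
      rw [← Prod.swap_inj]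
      simp
  let Φ : Ω → P × wstab z := fun x =>
    (⟨_, hP x⟩, ⟨τ (w x), hτz _⟩ * x.1.1)
  have hΦ : Function.Injective Φ := by
    intro x y hxy
    have h1 : T (w x) = T (w y) := by
      have := congrArg (fun p => p.1.1) hxy
      apply Subtype.ext
      funext bc
      exact congrFun (congrFun this bc.1) bc.2
    have h2 : τ (w x) * (x.1.1 : Equiv.Perm (Fin n)) = τ (w y) * (y.1.1 : Equiv.Perm (Fin n)) :=
      congrArg (fun p => (p.2 : Equiv.Perm (Fin n))) hxy
    have h3 : w x = w y := by
      funext k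
      rw [← Prod.swap_inj, ← hw, ← hw, hτw (w x), hτw (w y), h1]
      congr 1
      exact congrFun (congrArg DFunLike.coe h2) k
    rw [h3] at h2
    have h4 : (x.1.1 : Equiv.Perm (Fin n)) = y.1.1 := mul_left_cancel h2
    apply Subtype.ext
    refine Prod.ext (Subtype.ext h4) ?_
    funext k
    exact congrArg Prod.fst (congrFun h3 k)
  have := Nat.card_le_card_of_injective Φ hΦ
  rw [Nat.card_prod] at this
  refine this.trans (le_of_eq ?_)
  congr 1
  rw [Nat.card_eq_fintype_card, Fintype.card_coe, Fintype.card_piFinset]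

lemma Ez_trace {β : Type*} [Fintype β] [DecidableEq β] [Nonempty D] (z : Fin n → β) :
    (Ez D z).trace.re ≤ ((symS D n).card : ℝ) ^ Fintype.card β := by
  classical
  have h0 : (0 : ℝ) < Nat.card (wstab z) := by exact_mod_cast Nat.card_pos
  have h1 : (sqSum (prep n D) (wstab z)).trace.re = Nat.card {x : wstab z × (Fin n → D) //
      x.2 ∘ (x.1 : Equiv.Perm (Fin n)) ∘ (x.1 : Equiv.Perm (Fin n)) = x.2} := by
    rw [sqSum, Matrix.trace_sum, Complex.re_sum, Nat.card_eq_fintype_card, Fintype.card_subtype,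
      Finset.card_filter, Fintype.sum_prod_type]
    push_cast
    refine Finset.sum_congr (by congr!) fun h _ => ?_
    rw [Matrix.trace, Complex.re_sum]
    refine Finset.sum_congr rfl fun i _ => ?_
    rw [Matrix.diag_apply, prep_mul, prep_apply]
    simp only [Function.comp_assoc]
    rw [apply_ite Complex.re]
    have h9 : (i ∘ ⇑(h : Equiv.Perm (Fin n))) ∘ ⇑(h : Equiv.Perm (Fin n)) = i ↔
      i ∘ ⇑(h : Equiv.Perm (Fin n)) ∘ ⇑(h : Equiv.Perm (Fin n)) = i := Iff.rfl
    simp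
  have h2 : Nat.card {x : wstab z × (Fin n → D) //
      x.2 ∘ (x.1 : Equiv.Perm (Fin n)) ∘ (x.1 : Equiv.Perm (Fin n)) = x.2} ≤
      ((symS D n).card) ^ Fintype.card β * Nat.card (wstab z) := by
    refine (count_bound z).trans (Nat.mul_le_mul_right _ ?_)
    rw [← Finset.card_univ, ← Finset.prod_const]
    refine Finset.prod_le_prod (fun _ _ => Nat.zero_le _) fun b _ => symS_mono ?_
    refine (Finset.card_le_univ _).trans (by simp)
  rw [Ez, Matrix.trace_smul, Complex.smul_re, h1, smul_eq_mul, inv_mul_le_iff₀ h0, mul_comm]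
  exact_mod_cast h2

end Count


section FC
variable {N : Type*} [Fintype N] [DecidableEq N]

/-- the scalar function defining `mpow` -/
def pw (p u : ℝ) : ℝ := if u ≤ 0 then 0 else u ^ p

lemma pw_eq {p u : ℝ} (hp : p ≠ 0) (hu : 0 ≤ u) : pw p u = u ^ p := by
  unfold pw
  rcases eq_or_lt_of_le hu with h | h
  · rw [← h, if_pos le_rfl, Real.zero_rpow hp]
  · rw [if_neg (not_le.2 h)]

lemma pw_nonneg (p u : ℝ) : 0 ≤ pw p u := by
  unfold pw
  split_ifs with h
  · exact le_rfl
  · exact Real.rpow_nonneg (le_of_not_ge h) _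

lemma mpow_eq (A : Matrix N N ℂ) (p : ℝ) : mpow A p = matFun (pw p) A := rfl

lemma mpow_res {J : Type*} [Fintype J] {q : J → Matrix N N ℂ} (h : Res q) (a : J → ℝ) (p : ℝ) :
    mpow (∑ j, a j • q j) p = ∑ j, pw p (a j) • q j := by
  rw [mpow_eq, h.matFun_eq]

lemma mpow_psd {A : Matrix N N ℂ} (hA : A.IsHermitian) (p : ℝ) : (mpow A p).PosSemidef := by
  obtain ⟨q, hq, h1, h2⟩ := exists_res_eig hA
  rw [mpow_eq, h2]
  exact hq.psd_sum _ fun j _ => pw_nonneg _ _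

lemma mpow_commute {A B : Matrix N N ℂ} (hA : A.IsHermitian) (hAB : A * B = B * A) (p : ℝ) :
    mpow A p * B = B * mpow A p := matFun_commute hA hAB _

/-- joint resolution of commuting PSD matrices with nonnegative coefficients -/
lemma exists_joint_psd {A B : Matrix N N ℂ} (hA : A.PosSemidef) (hB : B.PosSemidef)
    (hAB : A * B = B * A) : ∃ (J : Type) (_ : Fintype J) (p : J → Matrix N N ℂ) (a b : J → ℝ),
      Res p ∧ A = ∑ j, a j • p j ∧ B = ∑ j, b j • p j ∧ (∀ j, 0 ≤ a j) ∧ ∀ j, 0 ≤ b j := by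
  classical
  obtain ⟨J, _, p, a, b, hp, h1, h2⟩ := exists_joint hA.isHermitian hB.isHermitian hAB
  refine ⟨J, inferInstance, p, fun j => if p j = 0 then 0 else a j,
    fun j => if p j = 0 then 0 else b j, hp, ?_, ?_, ?_, ?_⟩
  · rw [h1]; refine Finset.sum_congr rfl fun j _ => ?_
    by_cases h : p j = 0 <;> simp [h]
  · rw [h2]; refine Finset.sum_congr rfl fun j _ => ?_
    by_cases h : p j = 0 <;> simp [h]
  · intro j
    by_cases h : p j = 0
    · simp [h]
    · simp only [h, if_false]; exact hp.coeff_nonneg a (h1 ▸ hA) j h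
  · intro j
    by_cases h : p j = 0
    · simp [h]
    · simp only [h, if_false]; exact hp.coeff_nonneg b (h2 ▸ hB) j h

lemma holder_trace {B E : Matrix N N ℂ} (hB : B.PosSemidef) (hE : E.PosSemidef)
    (hBE : B * E = E * B) {t : ℝ} (ht0 : 0 < t) (ht1 : t < 1) :
    (B * mpow E t).trace.re ≤
      (mpow B (1 / (1 - t))).trace.re ^ (1 - t) * E.trace.re ^ t := by
  obtain ⟨J, _, p, b, e, hp, h1, h2, hb, he⟩ := exists_joint_psd hB hE hBE
  have h1t : 0 < 1 - t := by linarith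
  rw [h1, h2, mpow_res hp, mpow_res hp, hp.sum_mul_sum, Res.trace_sum, Res.trace_sum, Res.trace_sum]
  set w : J → ℝ := fun j => (p j).trace.re with hw
  have hw0 : ∀ j, 0 ≤ w j := fun j => hp.trace_nonneg j
  have hpq : Real.HolderConjugate (1 / (1 - t)) (1 / t) := by
    rw [Real.holderConjugate_iff]
    constructor
    · rw [lt_div_iff₀ h1t]; linarith
    · simp
  have key := Real.inner_le_Lp_mul_Lq_of_nonneg (f := fun j => b j * w j ^ (1 - t))
    (g := fun j => e j ^ t * w j ^ t) Finset.univ hpq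
    (fun j _ => mul_nonneg (hb j) (Real.rpow_nonneg (hw0 j) _))
    (fun j _ => mul_nonneg (Real.rpow_nonneg (he j) _) (Real.rpow_nonneg (hw0 j) _))
  simp only [one_div_one_div] at key
  convert key using 1
  · refine Finset.sum_congr rfl fun j _ => ?_
    rw [pw_eq ht0.ne' (he j)]
    have : w j = w j ^ (1 - t) * w j ^ t := by
      rw [← Real.rpow_add_of_nonneg (hw0 j) h1t.le ht0.le]; simp
    show b j * e j ^ t * w j = _
    conv_lhs => rw [this]
    ring
  · congr 1
    · congr 1
      refine Finset.sum_congr rfl fun j _ => ?_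
      rw [pw_eq (by positivity) (hb j), Real.mul_rpow (hb j) (Real.rpow_nonneg (hw0 j) _),
        ← Real.rpow_mul (hw0 j), mul_one_div_cancel h1t.ne', Real.rpow_one]
    · congr 1
      refine Finset.sum_congr rfl fun j _ => ?_
      rw [Real.mul_rpow (Real.rpow_nonneg (he j) _) (Real.rpow_nonneg (hw0 j) _),
        ← Real.rpow_mul (hw0 j), ← Real.rpow_mul (he j), mul_one_div_cancel ht0.ne', Real.rpow_one,
        Real.rpow_one]

lemma interp_psd {A E : Matrix N N ℂ} (hA : A.PosSemidef) (hE : E.PosSemidef)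
    (hAE : A * E = E * A) (hle : (E - A).PosSemidef) {t : ℝ} (ht0 : 0 < t) (ht1 : t < 1) :
    (mpow A (1 - t) * mpow E t - A).PosSemidef := by
  obtain ⟨J, _, p, a, e, hp, h1, h2, ha, he⟩ := exists_joint_psd hA hE hAE
  have h1t : 0 < 1 - t := by linarith
  rw [h1, h2, ← Finset.sum_sub_distrib] at hle
  simp_rw [← sub_smul] at hle
  have hle' := hp.coeff_nonneg _ hle
  rw [h1, h2, mpow_res hp, mpow_res hp, hp.sum_mul_sum, ← Finset.sum_sub_distrib]
  simp_rw [← sub_smul]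
  refine hp.psd_sum _ fun j hj => ?_
  have h3 := hle' j hj
  rw [pw_eq h1t.ne' (ha j), pw_eq ht0.ne' (he j), sub_nonneg]
  calc a j = a j ^ (1 - t) * a j ^ t := by
        rw [← Real.rpow_add_of_nonneg (ha j) h1t.le ht0.le]; simp
    _ ≤ a j ^ (1 - t) * e j ^ t := by
        gcongr
        · exact Real.rpow_nonneg (ha j) _
        · exact ha j
        · linarith

/-- Neyman–Pearson projection -/
def npTest (E E' : Matrix N N ℂ) (θ : ℝ) : Matrix N N ℂ :=
  matFun (fun u => if 0 ≤ u then 1 else 0) (E - θ • E')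

lemma smul_herm {A : Matrix N N ℂ} (hA : A.IsHermitian) (θ : ℝ) : (θ • A).IsHermitian := by
  unfold Matrix.IsHermitian
  rw [Matrix.conjTranspose_smul, hA.eq, star_trivial]

lemma npTest_psd {E E' : Matrix N N ℂ} (hE : E.IsHermitian) (hE' : E'.IsHermitian) (θ : ℝ) :
    (npTest E E' θ).PosSemidef := by
  obtain ⟨q, hq, h1, h2⟩ := exists_res_eig (hE.sub (smul_herm hE' θ))
  rw [npTest, h2]
  exact hq.psd_sum _ fun j _ => by split_ifs <;> norm_num

lemma npTest_one_sub {E E' : Matrix N N ℂ} (hE : E.IsHermitian) (hE' : E'.IsHermitian) (θ : ℝ) :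
    (1 - npTest E E' θ).PosSemidef := by
  obtain ⟨q, hq, h1, h2⟩ := exists_res_eig (hE.sub (smul_herm hE' θ))
  rw [npTest, h2, ← hq.sum, ← Finset.sum_sub_distrib]
  have : ∀ j, q j - (if 0 ≤ (hE.sub (smul_herm hE' θ)).eigenvalues j then (1 : ℝ) else 0) • q j =
      (1 - (if 0 ≤ (hE.sub (smul_herm hE' θ)).eigenvalues j then (1 : ℝ) else 0)) • q j := by
    intro j; rw [sub_smul, one_smul]
  simp_rw [this]
  exact hq.psd_sum _ fun j _ => by split_ifs <;> norm_num

lemma npTest_dom {E E' : Matrix N N ℂ} (hE : E.PosSemidef) (hE' : E'.PosSemidef)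
    (hc : E * E' = E' * E) {θ : ℝ} :
    (npTest E E' θ * E - θ • (npTest E E' θ * E')).PosSemidef := by
  obtain ⟨J, _, p, a, e, hp, h1, h2, ha, he⟩ := exists_joint_psd hE hE' hc
  rw [npTest, h1, h2, Finset.smul_sum, ← Finset.sum_sub_distrib]
  simp_rw [smul_smul, ← sub_smul]
  rw [hp.matFun_eq, hp.sum_mul_sum, hp.sum_mul_sum, Finset.smul_sum, ← Finset.sum_sub_distrib]
  simp_rw [smul_smul, ← sub_smul]
  refine hp.psd_sum _ fun j _ => ?_
  split_ifs with h
  · linarith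
  · simp

lemma npTest_comp {E E' : Matrix N N ℂ} (hE : E.PosSemidef) (hE' : E'.PosSemidef)
    (hc : E * E' = E' * E) {θ : ℝ} (hθ : 0 < θ) {t : ℝ} (ht0 : 0 < t) :
    mpow E t * (1 - npTest E E' θ) = (1 - npTest E E' θ) * mpow E t ∧
    (θ ^ t • mpow E' t - mpow E t * (1 - npTest E E' θ)).PosSemidef := by
  obtain ⟨J, _, p, a, e, hp, h1, h2, ha, he⟩ := exists_joint_psd hE hE' hc
  have h3 : 1 - npTest E E' θ = ∑ j, (1 - if 0 ≤ a j - θ * e j then (1 : ℝ) else 0) • p j := by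
    rw [npTest, h1, h2, Finset.smul_sum, ← Finset.sum_sub_distrib]
    simp_rw [smul_smul, ← sub_smul]
    rw [hp.matFun_eq, ← hp.sum, ← Finset.sum_sub_distrib]
    refine Finset.sum_congr rfl fun j _ => ?_
    rw [sub_smul, one_smul]
  have h4 : mpow E t = ∑ j, pw t (a j) • p j := by rw [h1, mpow_res hp]
  have h5 : mpow E' t = ∑ j, pw t (e j) • p j := by rw [h2, mpow_res hp]
  rw [h3, h4, h5, hp.sum_mul_sum, hp.sum_mul_sum]
  refine ⟨Finset.sum_congr rfl fun j _ => by rw [mul_comm], ?_⟩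
  rw [Finset.smul_sum, ← Finset.sum_sub_distrib]
  simp_rw [smul_smul, ← sub_smul]
  refine hp.psd_sum _ fun j _ => ?_
  rw [pw_eq ht0.ne' (ha j), pw_eq ht0.ne' (he j), ← Real.mul_rpow hθ.le (he j)]
  split_ifs with h
  · simp only [sub_self, mul_zero, sub_zero]
    exact Real.rpow_nonneg (mul_nonneg hθ.le (he j)) _
  · have : a j ^ t ≤ (θ * e j) ^ t := Real.rpow_le_rpow (ha j) (by linarith) ht0.le
    linarith

lemma matFun_conj {A U V : Matrix N N ℂ} (hA : A.IsHermitian) (hU : Uᴴ = V) (hUV : U * V = 1)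
    (f : ℝ → ℝ) : matFun f (U * A * V) = U * matFun f A * V := by
  obtain ⟨q, hq, h1, h2⟩ := exists_res_eig hA
  have hVU : V * U = 1 := mul_eq_one_comm.1 hUV
  have hV : Vᴴ = U := by rw [← hU, Matrix.conjTranspose_conjTranspose]
  have hmul : ∀ j k, (U * q j * V) * (U * q k * V) = U * (q j * q k) * V := by
    intro j k
    calc (U * q j * V) * (U * q k * V) = U * q j * (V * U) * q k * V := by simp only [mul_assoc]
      _ = _ := by rw [hVU, mul_one]; simp only [mul_assoc]
  have hr : Res (fun j => U * q j * V) := by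
    refine ⟨fun j => ?_, fun j k hjk => ?_, fun j => ?_, ?_⟩
    · unfold Matrix.IsHermitian
      rw [Matrix.conjTranspose_mul, Matrix.conjTranspose_mul, hU, hV, (hq.herm j).eq, mul_assoc]
    · rw [hmul, hq.orth j k hjk]; simp
    · rw [hmul, hq.idem]
    · rw [← Finset.sum_mul, ← Finset.mul_sum, hq.sum, mul_one, hUV]
  have h3 : ∀ a : N → ℝ, U * (∑ j, a j • q j) * V = ∑ j, a j • (U * q j * V) := by
    intro a
    rw [Finset.mul_sum, Finset.sum_mul]
    refine Finset.sum_congr rfl fun j _ => ?_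
    rw [mul_smul_comm, smul_mul_assoc]
  rw [h2, h3, ← hr.matFun_eq, ← h3, ← h1]

lemma psd_trace_eq {A : Matrix N N ℂ} (hA : A.PosSemidef) : A.trace = (A.trace.re : ℂ) := by
  have := (Complex.le_def.1 hA.trace_nonneg).2
  exact Complex.ext rfl (by simpa using this.symm)

end FC

section Tensor
variable {n : ℕ} {D : Type*} [Fintype D] [DecidableEq D]

lemma tensorFam_mul (A B : Fin n → Matrix D D ℂ) :
    tensorFam A * tensorFam B = tensorFam (fun k => A k * B k) := by
  ext i j
  simp only [tensorFam, Matrix.mul_apply, Matrix.of_apply]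
  rw [Fintype.prod_sum]
  refine Finset.sum_congr rfl fun x _ => ?_
  rw [Finset.prod_mul_distrib]

lemma tensorFam_one : tensorFam (fun _ : Fin n => (1 : Matrix D D ℂ)) = 1 := by
  ext i j
  simp only [tensorFam, Matrix.of_apply, Matrix.one_apply]
  by_cases h : i = j
  · simp [h]
  · rw [if_neg h]
    obtain ⟨k, hk⟩ := Function.ne_iff.1 h
    exact Finset.prod_eq_zero (Finset.mem_univ k) (by simp [hk])

lemma tensorFam_conj (A : Fin n → Matrix D D ℂ) :
    (tensorFam A)ᴴ = tensorFam (fun k => (A k)ᴴ) := by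
  ext i j
  simp [tensorFam, Matrix.conjTranspose_apply]

lemma tensorFam_trace (A : Fin n → Matrix D D ℂ) :
    (tensorFam A).trace = ∏ k, (A k).trace := by
  simp only [tensorFam, Matrix.trace, Matrix.diag_apply, Matrix.of_apply]
  rw [Fintype.prod_sum]

lemma tensorFam_sum {J : Type*} [Fintype J] (a : Fin n → J → ℝ) (p : Fin n → J → Matrix D D ℂ) :
    tensorFam (fun k => ∑ j, a k j • p k j) =
      ∑ j : Fin n → J, (∏ k, a k (j k)) • tensorFam (fun k => p k (j k)) := by
  classical
  ext x y
  simp only [tensorFam, Matrix.of_apply, Matrix.sum_apply, Matrix.smul_apply]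
  rw [Fintype.prod_sum]
  refine Finset.sum_congr rfl fun j _ => ?_
  simp only [Complex.real_smul]
  rw [Finset.prod_mul_distrib]
  push_cast
  rfl

lemma tensorFam_zero_of {A : Fin n → Matrix D D ℂ} {k : Fin n} (h : A k = 0) : tensorFam A = 0 := by
  ext i j
  simp only [tensorFam, Matrix.of_apply]
  exact Finset.prod_eq_zero (Finset.mem_univ k) (by simp [h])

lemma tensorFam_res {J : Type*} [Fintype J] {p : Fin n → J → Matrix D D ℂ} (hp : ∀ k, Res (p k)) :
    Res (fun j : Fin n → J => tensorFam (fun k => p k (j k))) := by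
  refine ⟨fun j => ?_, fun j l hjl => ?_, fun j => ?_, ?_⟩
  · unfold Matrix.IsHermitian
    rw [tensorFam_conj]
    congr 1
    funext k
    exact (hp k).herm _
  · rw [tensorFam_mul]
    obtain ⟨k, hk⟩ := Function.ne_iff.1 hjl
    exact tensorFam_zero_of (k := k) ((hp k).orth _ _ hk)
  · rw [tensorFam_mul]
    congr 1
    funext k
    exact (hp k).idem _
  · have := tensorFam_sum (fun _ _ => 1) p
    simp only [one_smul, Finset.prod_const_one, (hp _).sum, tensorFam_one] at this
    exact this.symm

lemma tensorFam_psd {A : Fin n → Matrix D D ℂ} (hA : ∀ k, (A k).PosSemidef) :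
    (tensorFam A).PosSemidef := by
  choose p hp h1 h2 using fun k => exists_res_eig (hA k).isHermitian
  have : A = fun k => ∑ j, (hA k).isHermitian.eigenvalues j • p k j := funext h1
  rw [this, tensorFam_sum]
  exact (tensorFam_res hp).psd_sum _ fun j _ =>
    Finset.prod_nonneg fun k _ => (hA k).eigenvalues_nonneg _

lemma mpow_tensorFam {A : Fin n → Matrix D D ℂ} (hA : ∀ k, (A k).PosSemidef) {s : ℝ} (hs : s ≠ 0) :
    mpow (tensorFam A) s = tensorFam (fun k => mpow (A k) s) := by
  choose p hp h1 h2 using fun k => exists_res_eig (hA k).isHermitian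
  have h3 : tensorFam A = tensorFam fun k => ∑ j, (hA k).isHermitian.eigenvalues j • p k j := by
    congr 1; exact funext h1
  have h4 : (tensorFam fun k => mpow (A k) s) =
      tensorFam fun k => ∑ j, pw s ((hA k).isHermitian.eigenvalues j) • p k j := by
    congr 1; funext k; exact h2 k _
  rw [h3, h4, tensorFam_sum, tensorFam_sum, mpow_res (tensorFam_res hp)]
  refine Finset.sum_congr rfl fun j _ => ?_
  congr 1
  rw [pw_eq hs (Finset.prod_nonneg fun k _ => (hA k).eigenvalues_nonneg _),
    ← Real.finsetProd_rpow _ _ (fun k _ => (hA k).eigenvalues_nonneg _)]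
  exact Finset.prod_congr rfl fun k _ => (pw_eq hs ((hA k).eigenvalues_nonneg _)).symm

lemma tensorFam_trace_re {A : Fin n → Matrix D D ℂ} (hA : ∀ k, (A k).PosSemidef) :
    (tensorFam A).trace.re = ∏ k, (A k).trace.re := by
  rw [tensorFam_trace, Finset.prod_congr rfl fun k _ => psd_trace_eq (hA k), ← Complex.ofReal_prod,
    Complex.ofReal_re]

end Tensor


section Gen
variable {n : ℕ} {D : Type*} [Fintype D] [DecidableEq D]
variable {γ δ : Type*} [Fintype γ] [DecidableEq γ] [Fintype δ] [DecidableEq δ]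

/-- the universal test -/
def uTest (D : Type*) [Fintype D] [DecidableEq D] (θ : ℝ) (u : Fin n → γ) (v : Fin n → δ) :
    Matrix (Fin n → D) (Fin n → D) ℂ :=
  npTest (Ez D (fun k => (u k, v k))) (Ez D u) θ

lemma wstab_pair_le (u : Fin n → γ) (v : Fin n → δ) : wstab (fun k => (u k, v k)) ≤ wstab u := by
  intro g hg
  rw [mem_wstab] at *
  ext k
  exact congrArg Prod.fst (congrFun hg k)

lemma uTest_psd (θ : ℝ) (u : Fin n → γ) (v : Fin n → δ) : (uTest D θ u v).PosSemidef :=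
  npTest_psd (Ez_psd _).isHermitian (Ez_psd _).isHermitian _

lemma uTest_one_sub (θ : ℝ) (u : Fin n → γ) (v : Fin n → δ) : (1 - uTest D θ u v).PosSemidef :=
  npTest_one_sub (Ez_psd _).isHermitian (Ez_psd _).isHermitian _

lemma uTest_conj (θ : ℝ) (u : Fin n → γ) (v : Fin n → δ) (g : Equiv.Perm (Fin n)) :
    prep n D g * uTest D θ u v * prep n D g⁻¹ =
      uTest D θ (u ∘ (g⁻¹ : Equiv.Perm (Fin n))) (v ∘ (g⁻¹ : Equiv.Perm (Fin n))) := by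
  unfold uTest npTest
  rw [← matFun_conj ((Ez_psd _).isHermitian.sub (smul_herm (Ez_psd _).isHermitian θ)) (prep_star g)
    (pi_mul_inv _ g)]
  congr 1
  rw [mul_sub, sub_mul, mul_smul_comm, smul_mul_assoc, Ez_conj, Ez_conj]
  rfl

lemma comm_of_conj {A : Matrix (Fin n → D) (Fin n → D) ℂ} {g : Equiv.Perm (Fin n)}
    (h : prep n D g * A * prep n D g⁻¹ = A) : prep n D g * A = A * prep n D g := by
  have h3 := congrArg (· * prep n D g) h
  simp only [mul_assoc, pi_inv_mul, mul_one] at h3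
  exact h3

lemma trace_avg {β : Type*} (z : Fin n → β) {T σ : Matrix (Fin n → D) (Fin n → D) ℂ}
    (hT : T.PosSemidef) (hTc : ∀ g ∈ wstab z, prep n D g * T = T * prep n D g)
    (hσ : σ.PosSemidef) (hσ1 : σ.trace.re = 1) :
    (T * σ).trace.re ≤ (T * Ez D z).trace.re := by
  classical
  set H := wstab z
  set m : ℝ := (Nat.card H : ℝ) with hm
  have hm0 : 0 < m := by rw [hm]; exact_mod_cast Nat.card_pos
  set S := conjSum (prep n D) H σ with hS
  have hSpsd : S.PosSemidef := by
    rw [hS, conjSum]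
    refine Matrix.posSemidef_sum _ fun h _ => ?_
    have := hσ.mul_mul_conjTranspose_same (prep n D h)
    rwa [prep_star] at this
  have htr : ∀ A : Matrix (Fin n → D) (Fin n → D) ℂ, (∀ g ∈ H, prep n D g * A = A * prep n D g) →
      (A * S).trace.re = m * (A * σ).trace.re := by
    intro A hA
    have h3 : ∀ h : H, (A * (prep n D h * σ * prep n D (h : Equiv.Perm (Fin n))⁻¹)).trace =
        (A * σ).trace := by
      intro h
      calc (A * (prep n D h * σ * prep n D (h : Equiv.Perm (Fin n))⁻¹)).trace
          = ((A * prep n D h * σ) * prep n D (h : Equiv.Perm (Fin n))⁻¹).trace := by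
            simp only [mul_assoc]
        _ = (prep n D (h : Equiv.Perm (Fin n))⁻¹ * (A * prep n D h * σ)).trace :=
            Matrix.trace_mul_comm _ _
        _ = (prep n D (h : Equiv.Perm (Fin n))⁻¹ * prep n D h * (A * σ)).trace := by
            rw [← hA _ h.2]; simp only [mul_assoc]
        _ = _ := by rw [pi_inv_mul, one_mul]
    rw [hS, conjSum, Finset.mul_sum, Matrix.trace_sum, Finset.sum_congr rfl fun h _ => h3 h]
    rw [hm]; simp [Nat.card_eq_fintype_card]
  have h1 : S.trace.re = m := by
    have := htr 1 (fun g _ => by simp)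
    simpa [hσ1] using this
  have h2 := Ez_dom z hSpsd (fun g hg => conjSum_comm _ _ _ hg)
  have h4 := trace_mul_le hT h2
  rw [htr T hTc, h1, mul_smul_comm, Matrix.trace_smul, Complex.smul_re, smul_eq_mul] at h4
  exact le_of_mul_le_mul_left h4 hm0

lemma prod_comp_perm (q : δ → ℝ) (v : Fin n → δ) (g : Equiv.Perm (Fin n)) :
    ∏ k, q (v (g k)) = ∏ k, q (v k) := Equiv.prod_comp g (fun k => q (v k))

lemma prod_prob_sum {q : δ → ℝ} (hq1 : ∑ e, q e = 1) : ∑ v : Fin n → δ, ∏ k, q (v k) = 1 := by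
  have := Fintype.prod_sum (fun (_ : Fin n) e => q e)
  rw [hq1] at this
  simpa using this.symm

lemma re_trace_smul {N : Type*} [Fintype N] (c : ℝ) (A : Matrix N N ℂ) :
    (c • A).trace.re = c * A.trace.re := by
  rw [Matrix.trace_smul, Complex.smul_re, smul_eq_mul]

lemma re_trace_sum {N I : Type*} [Fintype N] [Fintype I] (A : I → Matrix N N ℂ) :
    (∑ i, A i).trace.re = ∑ i, (A i).trace.re := by
  rw [Matrix.trace_sum, Complex.re_sum]

/-- second kind error -/
lemma partB [Nonempty D] {θ : ℝ} (hθ : 0 < θ) {p : γ → ℝ} (hp : ∀ g, 0 ≤ p g) (hp1 : ∑ g, p g = 1)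
    {q : δ → ℝ} (hq : ∀ e, 0 ≤ q e) (hq1 : ∑ e, q e = 1)
    (σ : (Fin n → γ) → Matrix (Fin n → D) (Fin n → D) ℂ) (hσ : ∀ u, IsDensity (σ u)) :
    ∑ u : Fin n → γ, ∑ v : Fin n → δ, (∏ k, p (u k)) * (∏ k, q (v k)) *
      (uTest D θ u v * σ u).trace.re ≤
      θ⁻¹ * ((symS D n).card : ℝ) ^ (Fintype.card γ * Fintype.card δ) := by
  set R := ((symS D n).card : ℝ) ^ (Fintype.card γ * Fintype.card δ) with hR
  have hqn : ∀ v : Fin n → δ, 0 ≤ ∏ k, q (v k) := fun v => Finset.prod_nonneg fun k _ => hq _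
  have key : ∀ u : Fin n → γ, ∑ v : Fin n → δ, (∏ k, q (v k)) * (uTest D θ u v * σ u).trace.re ≤
      θ⁻¹ * R := by
    intro u
    set Tb := ∑ v : Fin n → δ, (∏ k, q (v k)) • uTest D θ u v with hTb
    have hTpsd : Tb.PosSemidef :=
      Matrix.posSemidef_sum _ fun v _ => PSD_smul (uTest_psd _ _ _) (hqn v)
    have hTc : ∀ g ∈ wstab u, prep n D g * Tb = Tb * prep n D g := by
      intro g hg
      apply comm_of_conj
      rw [hTb, Finset.mul_sum, Finset.sum_mul]
      refine Fintype.sum_equiv (Equiv.arrowCongr g (Equiv.refl δ)) _ _ fun v => ?_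
      rw [mul_smul_comm, smul_mul_assoc, uTest_conj, mem_wstab.1 ((wstab u).inv_mem hg)]
      have : (Equiv.arrowCongr g (Equiv.refl δ)) v = v ∘ (g⁻¹ : Equiv.Perm (Fin n)) := rfl
      rw [this]
      simp only [Function.comp_apply]
      rw [prod_comp_perm]
    have hlin : ∀ A, (Tb * A).trace.re =
        ∑ v : Fin n → δ, (∏ k, q (v k)) * (uTest D θ u v * A).trace.re := by
      intro A
      rw [hTb, Finset.sum_mul, re_trace_sum]
      refine Finset.sum_congr rfl fun v _ => ?_
      rw [smul_mul_assoc, re_trace_smul]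
    rw [← hlin]
    refine (trace_avg u hTpsd hTc (hσ u).1 (by rw [(hσ u).2]; rfl)).trans ?_
    rw [hlin]
    have h1 : ∀ v : Fin n → δ, (uTest D θ u v * Ez D u).trace.re ≤ θ⁻¹ * R := by
      intro v
      have h2 := PSD_trace_nonneg (npTest_dom (Ez_psd (D := D) (fun k => (u k, v k))) (Ez_psd u)
        (Ez_commute _ _ (wstab_pair_le u v)) (θ := θ))
      rw [Matrix.trace_sub, Complex.sub_re, re_trace_smul] at h2
      have h3 : (uTest D θ u v * Ez D (fun k => (u k, v k))).trace.re ≤ R := by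
        rw [Matrix.trace_mul_comm]
        refine (trace_mul_le (Ez_psd _) (uTest_one_sub θ u v)).trans ?_
        rw [mul_one]
        refine (Ez_trace _).trans (le_of_eq ?_)
        rw [Fintype.card_prod]
      rw [le_inv_mul_iff₀ hθ]
      unfold uTest at h3 ⊢
      linarith
    calc ∑ v : Fin n → δ, (∏ k, q (v k)) * (uTest D θ u v * Ez D u).trace.re
        ≤ ∑ v : Fin n → δ, (∏ k, q (v k)) * (θ⁻¹ * R) :=
          Finset.sum_le_sum fun v _ => mul_le_mul_of_nonneg_left (h1 v) (hqn v)
      _ = θ⁻¹ * R := by rw [← Finset.sum_mul, prod_prob_sum hq1, one_mul]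
  calc _ = ∑ u : Fin n → γ, (∏ k, p (u k)) * ∑ v : Fin n → δ,
        (∏ k, q (v k)) * (uTest D θ u v * σ u).trace.re := by
        refine Finset.sum_congr rfl fun u _ => ?_
        rw [Finset.mul_sum]
        exact Finset.sum_congr rfl fun v _ => by ring
    _ ≤ ∑ u : Fin n → γ, (∏ k, p (u k)) * (θ⁻¹ * R) :=
        Finset.sum_le_sum fun u _ =>
          mul_le_mul_of_nonneg_left (key u) (Finset.prod_nonneg fun k _ => hp _)
    _ = θ⁻¹ * R := by rw [← Finset.sum_mul, prod_prob_sum hp1, one_mul]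

/-- the argument of the logarithm -/
def renArg (p : γ → ℝ) (q : δ → ℝ) (ρ : γ → δ → Matrix D D ℂ) (t : ℝ) : ℝ :=
  ∑ g, p g * (mpow (∑ e, q e • mpow (ρ g e) (1 - t)) (1 / (1 - t))).trace.re

lemma mix_psd {q : δ → ℝ} (hq : ∀ e, 0 ≤ q e) {ρ : δ → Matrix D D ℂ}
    (hρ : ∀ e, (ρ e).PosSemidef) (s : ℝ) : (∑ e, q e • mpow (ρ e) s).PosSemidef :=
  Matrix.posSemidef_sum _ fun e _ => PSD_smul (mpow_psd (hρ e).isHermitian s) (hq e)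

lemma jensen_rpow {γ : Type*} [Fintype γ] {p τ : γ → ℝ} (hp : ∀ g, 0 ≤ p g) (hp1 : ∑ g, p g = 1)
    (hτ0 : ∀ g, 0 ≤ τ g) {s : ℝ} (hs0 : 0 ≤ s) (hs1 : s ≤ 1) :
    ∑ g, p g * τ g ^ s ≤ (∑ g, p g * τ g) ^ s := by
  have := (Real.concaveOn_rpow hs0 hs1).le_map_sum (t := Finset.univ) (w := p)
    (p := τ) (fun g _ => hp g) hp1 (fun g _ => hτ0 g)
  simpa only [smul_eq_mul] using this

set_option maxHeartbeats 1000000 in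
/-- first kind error for i.i.d. states -/
lemma partA [Nonempty D] {θ : ℝ} (hθ : 0 < θ) {p : γ → ℝ} (hp : ∀ g, 0 ≤ p g) (hp1 : ∑ g, p g = 1)
    {q : δ → ℝ} (hq : ∀ e, 0 ≤ q e)
    (ρ : γ → δ → Matrix D D ℂ) (hρ : ∀ g e, IsDensity (ρ g e)) {t : ℝ} (ht0 : 0 < t) (ht1 : t < 1) :
    ∑ u : Fin n → γ, ∑ v : Fin n → δ, (∏ k, p (u k)) * (∏ k, q (v k)) *
      ((1 - uTest D θ u v) * tensorFam (fun k => ρ (u k) (v k))).trace.re ≤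
      θ ^ t * (((symS D n).card : ℝ) ^ Fintype.card γ) ^ t * (renArg p q ρ t ^ (1 - t)) ^ n := by
  have h1t : 0 < 1 - t := by linarith
  have hqn : ∀ v : Fin n → δ, 0 ≤ ∏ k, q (v k) := fun v => Finset.prod_nonneg fun k _ => hq _
  have hpn : ∀ v : Fin n → γ, 0 ≤ ∏ k, p (v k) := fun v => Finset.prod_nonneg fun k _ => hp _
  set Bm : γ → Matrix D D ℂ := fun g => ∑ e, q e • mpow (ρ g e) (1 - t) with hBm
  have hBpsd : ∀ g, (Bm g).PosSemidef := fun g => mix_psd hq (fun e => (hρ g e).1) _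
  set τ : γ → ℝ := fun g => (mpow (Bm g) (1 / (1 - t))).trace.re with hτ
  have hτ0 : ∀ g, 0 ≤ τ g := fun g => PSD_trace_nonneg (mpow_psd (hBpsd g).isHermitian _)
  set R := ((symS D n).card : ℝ) ^ Fintype.card γ with hR
  -- pointwise bound
  have h1 : ∀ (u : Fin n → γ) (v : Fin n → δ),
      ((1 - uTest D θ u v) * tensorFam (fun k => ρ (u k) (v k))).trace.re ≤
      θ ^ t * (tensorFam (fun k => mpow (ρ (u k) (v k)) (1 - t)) * mpow (Ez D u) t).trace.re := by
    intro u v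
    have hA : (tensorFam (fun k => ρ (u k) (v k))).PosSemidef := tensorFam_psd fun k => (hρ _ _).1
    have hAc : ∀ g ∈ wstab (fun k => (u k, v k)),
        prep n D g * tensorFam (fun k => ρ (u k) (v k)) =
        tensorFam (fun k => ρ (u k) (v k)) * prep n D g := fun g hg =>
      prep_comm_tensor (z := fun k => (u k, v k)) (fun ge => ρ ge.1 ge.2) hg
    have hAE := (grpAlg_commute (Ez_mem (D := D) (fun k => (u k, v k))) hAc).symm
    have htr : (tensorFam (fun k => ρ (u k) (v k))).trace.re = 1 := by
      rw [tensorFam_trace]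
      simp [(hρ _ _).2]
    have hdom := Ez_dom _ hA hAc
    rw [htr, one_smul] at hdom
    have h2 := interp_psd hA (Ez_psd _) hAE hdom ht0 ht1
    have h3 := trace_mul_le (uTest_one_sub θ u v) h2
    obtain ⟨hc, h4⟩ := npTest_comp (Ez_psd (D := D) (fun k => (u k, v k))) (Ez_psd u)
        (Ez_commute _ _ (wstab_pair_le u v)) hθ ht0
    refine h3.trans ?_
    rw [mpow_tensorFam (fun k => (hρ _ _).1) h1t.ne', ← re_trace_smul, ← mul_smul_comm,
      Matrix.trace_mul_comm, mul_assoc]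
    refine trace_mul_le ?_ h4
    exact tensorFam_psd fun k => mpow_psd (hρ _ _).1.isHermitian _
  -- sum over v
  have h2 : ∀ u : Fin n → γ, ∑ v : Fin n → δ, (∏ k, q (v k)) *
      ((1 - uTest D θ u v) * tensorFam (fun k => ρ (u k) (v k))).trace.re ≤
      θ ^ t * (R ^ t * ∏ k, τ (u k) ^ (1 - t)) := by
    intro u
    have hB : (tensorFam (fun k => Bm (u k))).PosSemidef := tensorFam_psd fun k => hBpsd _
    have hBE := (grpAlg_commute (Ez_mem (D := D) u)
      (fun g hg => prep_comm_tensor (D := D) (z := u) Bm hg)).symm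
    calc _ ≤ ∑ v : Fin n → δ, (∏ k, q (v k)) * (θ ^ t *
          (tensorFam (fun k => mpow (ρ (u k) (v k)) (1 - t)) * mpow (Ez D u) t).trace.re) :=
          Finset.sum_le_sum fun v _ => mul_le_mul_of_nonneg_left (h1 u v) (hqn v)
      _ = θ ^ t * (tensorFam (fun k => Bm (u k)) * mpow (Ez D u) t).trace.re := by
          rw [hBm]
          simp only []
          rw [tensorFam_sum, Finset.sum_mul, re_trace_sum, Finset.mul_sum]
          refine Finset.sum_congr rfl fun v _ => ?_
          rw [smul_mul_assoc, re_trace_smul]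
          ring
      _ ≤ θ ^ t * (R ^ t * ∏ k, τ (u k) ^ (1 - t)) := by
          refine mul_le_mul_of_nonneg_left ?_ (Real.rpow_nonneg hθ.le _)
          refine (holder_trace hB (Ez_psd u) hBE ht0 ht1).trans ?_
          rw [mpow_tensorFam (fun k => hBpsd _) (by positivity), tensorFam_trace_re
            (fun k => mpow_psd (hBpsd _).isHermitian _), mul_comm]
          rw [Real.finsetProd_rpow _ _ (fun k _ => hτ0 _)]
          refine mul_le_mul_of_nonneg_right ?_ (Real.rpow_nonneg
            (Finset.prod_nonneg fun k _ => hτ0 _) _)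
          exact Real.rpow_le_rpow (PSD_trace_nonneg (Ez_psd u)) (Ez_trace u) ht0.le
  calc _ = ∑ u : Fin n → γ, (∏ k, p (u k)) * ∑ v : Fin n → δ,
        (∏ k, q (v k)) * ((1 - uTest D θ u v) * tensorFam (fun k => ρ (u k) (v k))).trace.re := by
        refine Finset.sum_congr rfl fun u _ => ?_
        rw [Finset.mul_sum]
        exact Finset.sum_congr rfl fun v _ => by ring
    _ ≤ ∑ u : Fin n → γ, (∏ k, p (u k)) * (θ ^ t * (R ^ t * ∏ k, τ (u k) ^ (1 - t))) :=
        Finset.sum_le_sum fun u _ => mul_le_mul_of_nonneg_left (h2 u) (hpn u)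
    _ = θ ^ t * R ^ t * (∑ g, p g * τ g ^ (1 - t)) ^ n := by
        have := Fintype.prod_sum (fun (_ : Fin n) g => p g * τ g ^ (1 - t))
        rw [Finset.prod_const, Finset.card_univ, Fintype.card_fin] at this
        rw [this, Finset.mul_sum]
        refine Finset.sum_congr rfl fun u _ => ?_
        rw [Finset.prod_mul_distrib]; ring
    _ ≤ _ := by
        have hR0 : 0 ≤ R := by positivity
        refine mul_le_mul_of_nonneg_left ?_ (mul_nonneg (Real.rpow_nonneg hθ.le _)
          (Real.rpow_nonneg hR0 _))
        refine pow_le_pow_left₀ (Finset.sum_nonneg fun g _ => mul_nonneg (hp g)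
          (Real.rpow_nonneg (hτ0 g) _)) ?_ n
        exact jensen_rpow hp hp1 hτ0 h1t.le (by linarith)

end Gen


section Types
variable {n : ℕ} {S : Type*} [Fintype S] [DecidableEq S]

lemma pow_fact_le (k m : ℕ) : k ^ m * k.factorial ≤ k ^ k * m.factorial := by
  rcases le_total k m with h | h
  · have := Nat.factorial_mul_pow_sub_le_factorial h
    calc k ^ m * k.factorial = k ^ k * (k.factorial * k ^ (m - k)) := by
          rw [← Nat.add_sub_cancel' h, pow_add]; simp; ring
      _ ≤ _ := Nat.mul_le_mul_left _ this
  · have := Nat.factorial_mul_pow_le_factorial (m := m) (n := k - m)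
    have h2 : k.factorial ≤ m.factorial * k ^ (k - m) := by
      have h3 := Nat.factorial_mul_descFactorial (n := k) (k := k - m) (by omega)
      rw [show k - (k - m) = m by omega] at h3
      rw [← h3]
      exact Nat.mul_le_mul_left _ (Nat.descFactorial_le_pow _ _)
    calc k ^ m * k.factorial ≤ k ^ m * (m.factorial * k ^ (k - m)) := Nat.mul_le_mul_left _ h2
      _ = (k ^ m * k ^ (k - m)) * m.factorial := by ring
      _ = _ := by rw [← pow_add, Nat.add_sub_cancel' h]

lemma card_class (s : Fin n → S) :
    (Finset.univ.filter (fun x : Fin n → S => wtype x = wtype s)).card *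
      ∏ a, (wtype s a).factorial = n.factorial := by
  classical
  have h1 : Fintype.card (Equiv.Perm (Fin n)) = n.factorial := by
    rw [Fintype.card_perm, Fintype.card_fin]
  have h2 : Fintype.card {g : Equiv.Perm (Fin n) // s ∘ g = s} = ∏ a, (wtype s a).factorial := by
    rw [DomMulAct.stabilizer_card]
    refine Finset.prod_congr rfl fun a _ => ?_
    rw [Fintype.card_subtype]; rfl
  rw [← h1, ← h2, ← Finset.card_univ (α := Equiv.Perm (Fin n)),
    Finset.card_eq_sum_card_fiberwise (f := fun g : Equiv.Perm (Fin n) => s ∘ g)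
      (t := Finset.univ.filter (fun x : Fin n → S => wtype x = wtype s))
      (fun g _ => by simp [wtype_comp])]
  rw [Finset.sum_const_nat (m := Fintype.card {g : Equiv.Perm (Fin n) // s ∘ g = s})]
  intro x hx
  rw [Finset.mem_filter] at hx
  obtain ⟨g0, hg0⟩ := exists_perm_of_wtype _ _ hx.2
  rw [Fintype.card_subtype]
  refine Finset.card_bij (fun g _ => g * g0⁻¹) ?_ ?_ ?_
  · intro g hg
    simp only [Finset.mem_filter, Finset.mem_univ, true_and] at *
    ext k
    have := congrFun hg (g0⁻¹ k)
    rw [hg0] at this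
    simpa using this
  · intro a _ b _ hab
    exact mul_right_cancel hab
  · intro g hg
    simp only [Finset.mem_filter, Finset.mem_univ, true_and] at *
    refine ⟨g * g0, ?_, by simp⟩
    ext k
    have := congrFun hg (g0 k)
    rw [hg0]
    simpa using this

lemma prod_eq_wtype (Q : S → ℝ) (x : Fin n → S) : ∏ k, Q (x k) = ∏ a, Q a ^ wtype x a := by
  rw [← Finset.prod_fiberwise (s := Finset.univ) (g := x)]
  refine Finset.prod_congr rfl fun a _ => ?_
  rw [wtype, Finset.prod_congr rfl (g := fun _ => Q a), Finset.prod_const]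
  intro k hk
  rw [(Finset.mem_filter.1 hk).2]

lemma card_types [Nonempty S] :
    ((Finset.univ : Finset (Fin n → S)).image wtype).card ≤ (n + 1) ^ (Fintype.card S - 1) := by
  classical
  obtain ⟨a0⟩ := ‹Nonempty S›
  have hc : Fintype.card ({a // a ≠ a0} → Fin (n + 1)) = (n + 1) ^ (Fintype.card S - 1) := by
    rw [Fintype.card_fun, Fintype.card_fin]
    congr 1
    simp
  rw [← hc, ← Finset.card_univ]
  have hsum : ∀ T ∈ (Finset.univ : Finset (Fin n → S)).image wtype, ∑ a, T a = n := by
    intro T hT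
    obtain ⟨x, -, rfl⟩ := Finset.mem_image.1 hT
    rw [wtype_sum]; simp
  have hle : ∀ T ∈ (Finset.univ : Finset (Fin n → S)).image wtype, ∀ a, T a < n + 1 := by
    intro T hT a
    have := Finset.single_le_sum (f := T) (fun _ _ => Nat.zero_le _) (Finset.mem_univ a)
    rw [hsum T hT] at this
    omega
  refine Finset.card_le_card_of_injOn (fun T a => Fin.ofNat (n + 1) (T a)) (fun _ _ => Finset.mem_coe.2 (Finset.mem_univ _)) ?_
  intro T hT T' hT' h
  have h1 : ∀ a, a ≠ a0 → T a = T' a := by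
    intro a ha
    have := congrArg Fin.val (congrFun h ⟨a, ha⟩)
    simp only [Fin.ofNat] at this
    rwa [Nat.mod_eq_of_lt (hle T hT a), Nat.mod_eq_of_lt (hle T' hT' a)] at this
  funext a
  by_cases ha : a = a0
  · subst ha
    have e1 := hsum T hT
    have e2 := hsum T' hT'
    rw [← Finset.add_sum_erase _ _ (Finset.mem_univ a)] at e1 e2
    have : ∑ x ∈ Finset.univ.erase a, T x = ∑ x ∈ Finset.univ.erase a, T' x :=
      Finset.sum_congr rfl fun x hx => h1 x (Finset.ne_of_mem_erase hx)
    omega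
  · exact h1 a ha

lemma type_step [Nonempty S] (hn : 1 ≤ n) (F : (Fin n → S) → ℝ) (hF0 : ∀ s, 0 ≤ F s)
    (hF : ∀ s (g : Equiv.Perm (Fin n)), F (s ∘ g) = F s) (s : Fin n → S) :
    ∃ Q : S → ℝ, (∀ a, 0 ≤ Q a) ∧ ∑ a, Q a = 1 ∧
      F s ≤ ((n : ℝ) + 1) ^ (Fintype.card S - 1) * ∑ x : Fin n → S, (∏ k, Q (x k)) * F x := by
  classical
  have hn0 : (0 : ℝ) < n := by exact_mod_cast hn
  set Q : S → ℝ := fun a => (wtype s a : ℝ) / n with hQ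
  have hQ0 : ∀ a, 0 ≤ Q a := fun a => by positivity
  have hQ1 : ∑ a, Q a = 1 := by
    rw [hQ, ← Finset.sum_div, ← Nat.cast_sum, wtype_sum, Fintype.card_fin, div_self hn0.ne']
  refine ⟨Q, hQ0, hQ1, ?_⟩
  let P : (Fin n → S) → ℝ := fun x => (Finset.univ.filter (fun y : Fin n → S => wtype y = wtype x)).card * ∏ k, Q (x k)
  have hPf : ∀ x, P x = n.factorial / (n : ℝ) ^ n *
      ∏ a, ((wtype s a : ℝ) ^ (wtype x a) / (wtype x a).factorial) := by
    intro x
    have h1 : ((Finset.univ.filter (fun y : Fin n → S => wtype y = wtype x)).card : ℝ) =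
        n.factorial / ∏ a, ((wtype x a).factorial : ℝ) := by
      rw [eq_div_iff (Finset.prod_ne_zero_iff.2 fun a _ => by exact_mod_cast (Nat.factorial_ne_zero _))]
      exact_mod_cast card_class x
    have h2 : ∏ k, Q (x k) = (∏ a, (wtype s a : ℝ) ^ (wtype x a)) / (n : ℝ) ^ n := by
      rw [prod_eq_wtype, hQ]
      simp_rw [div_pow]
      rw [Finset.prod_div_distrib, Finset.prod_pow_eq_pow_sum, wtype_sum, Fintype.card_fin]
    show _ * _ = _
    rw [h1, h2, Finset.prod_div_distrib]
    ring
  have hPle : ∀ x, P x ≤ P s := by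
    intro x
    rw [hPf, hPf]
    refine mul_le_mul_of_nonneg_left ?_ (by positivity)
    refine Finset.prod_le_prod (fun a _ => by positivity) fun a _ => ?_
    rw [div_le_div_iff₀ (by positivity) (by positivity)]
    exact_mod_cast pow_fact_le (wtype s a) (wtype x a)
  have hclass : ∀ x y : Fin n → S, wtype y = wtype x → ∏ k, Q (y k) = ∏ k, Q (x k) := by
    intro x y h
    rw [prod_eq_wtype, prod_eq_wtype, h]
  have h1 : (1 : ℝ) ≤ ((n : ℝ) + 1) ^ (Fintype.card S - 1) * P s := by
    calc (1 : ℝ) = ∑ x : Fin n → S, ∏ k, Q (x k) := (prod_prob_sum hQ1).symm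
      _ = ∑ T ∈ (Finset.univ : Finset (Fin n → S)).image wtype,
          ∑ x with wtype x = T, ∏ k, Q (x k) :=
          (Finset.sum_fiberwise_of_maps_to (fun x hx => Finset.mem_image_of_mem _ hx) _).symm
      _ ≤ ∑ T ∈ (Finset.univ : Finset (Fin n → S)).image wtype, P s := by
          refine Finset.sum_le_sum fun T hT => ?_
          obtain ⟨x, -, rfl⟩ := Finset.mem_image.1 hT
          refine le_trans (le_of_eq ?_) (hPle x)
          rw [Finset.sum_congr rfl fun y hy => hclass x y (Finset.mem_filter.1 hy).2,
            Finset.sum_const, nsmul_eq_mul]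
      _ = ((Finset.univ : Finset (Fin n → S)).image wtype).card * P s := by
          rw [Finset.sum_const, nsmul_eq_mul]
      _ ≤ _ := by
          refine mul_le_mul_of_nonneg_right ?_ ?_
          · exact_mod_cast card_types
          · exact mul_nonneg (Nat.cast_nonneg _) (Finset.prod_nonneg fun k _ => hQ0 _)
  have h2 : P s * F s ≤ ∑ x : Fin n → S, (∏ k, Q (x k)) * F x := by
    have h3 : P s * F s = ∑ x with wtype x = wtype s, (∏ k, Q (x k)) * F x := by
      rw [Finset.sum_congr rfl (g := fun _ => (∏ k, Q (s k)) * F s), Finset.sum_const, nsmul_eq_mul]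
      · ring
      · intro x hx
        have hx' := (Finset.mem_filter.1 hx).2
        obtain ⟨g, hg⟩ := exists_perm_of_wtype _ _ hx'
        rw [hclass s x hx', hg, hF]
    rw [h3]
    exact Finset.sum_le_sum_of_subset_of_nonneg (Finset.filter_subset _ _)
      fun x _ _ => mul_nonneg (Finset.prod_nonneg fun k _ => hQ0 _) (hF0 x)
  calc F s = 1 * F s := (one_mul _).symm
    _ ≤ (((n : ℝ) + 1) ^ (Fintype.card S - 1) * P s) * F s := mul_le_mul_of_nonneg_right h1 (hF0 s)
    _ = ((n : ℝ) + 1) ^ (Fintype.card S - 1) * (P s * F s) := by ring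
    _ ≤ _ := mul_le_mul_of_nonneg_left h2 (by positivity)

end Types


section Numerics

/-- weak compositions of `n` into `d` parts -/
def wcomp (n d : ℕ) : Finset (Fin d → ℕ) := (Finset.univ : Finset (Fin d)).piAntidiag n

lemma mem_wcomp {n d : ℕ} {a : Fin d → ℕ} : a ∈ wcomp n d ↔ ∑ i, a i = n := by
  simp [wcomp, Finset.mem_piAntidiag]

lemma wcomp_card_le (n d : ℕ) (hd : 1 ≤ d) : (wcomp n d).card ≤ (n + 1) ^ (d - 1) := by
  classical
  let a0 : Fin d := ⟨0, hd⟩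
  have hc : Fintype.card ({a // a ≠ a0} → Fin (n + 1)) = (n + 1) ^ (d - 1) := by
    rw [Fintype.card_fun, Fintype.card_fin]
    congr 1
    simp
  rw [← hc, ← Finset.card_univ]
  have hsum : ∀ T ∈ wcomp n d, ∑ a, T a = n := fun T hT => mem_wcomp.1 hT
  have hle : ∀ T ∈ wcomp n d, ∀ a, T a < n + 1 := by
    intro T hT a
    have := Finset.single_le_sum (f := T) (fun _ _ => Nat.zero_le _) (Finset.mem_univ a)
    rw [hsum T hT] at this
    omega
  refine Finset.card_le_card_of_injOn (fun T a => Fin.ofNat (n + 1) (T a))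
    (fun _ _ => Finset.mem_coe.2 (Finset.mem_univ _)) ?_
  intro T hT T' hT' h
  have h1 : ∀ a, a ≠ a0 → T a = T' a := by
    intro a ha
    have := congrArg Fin.val (congrFun h ⟨a, ha⟩)
    simp only [Fin.ofNat] at this
    rwa [Nat.mod_eq_of_lt (hle T hT a), Nat.mod_eq_of_lt (hle T' hT' a)] at this
  funext a
  by_cases ha : a = a0
  · have e1 := hsum T hT
    have e2 := hsum T' hT'
    rw [← Finset.add_sum_erase _ _ (Finset.mem_univ a)] at e1 e2
    have : ∑ x ∈ Finset.univ.erase a, T x = ∑ x ∈ Finset.univ.erase a, T' x :=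
      Finset.sum_congr rfl fun x hx => h1 x (ha ▸ Finset.ne_of_mem_erase hx)
    omega
  · exact h1 a ha

lemma card_lt_pairs (d : ℕ) : Fintype.card {c : Fin d × Fin d // c.1 < c.2} = d * (d - 1) / 2 := by
  classical
  rw [Fintype.card_subtype, Finset.card_filter, Fintype.sum_prod_type_right]
  have : ∀ b : Fin d, (Finset.univ.filter (fun a : Fin d => a < b)).card = (b : ℕ) := by
    intro b
    rw [show Finset.univ.filter (fun a : Fin d => a < b) = Finset.Iio b by ext; simp, Fin.card_Iio]
  have h2 : ∀ b : Fin d, (∑ a : Fin d, if (a, b).1 < (a, b).2 then 1 else 0) = (b : ℕ) := by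
    intro b; rw [← this b, Finset.card_filter]
  rw [Finset.sum_congr rfl fun b _ => h2 b]
  rw [Fin.sum_univ_eq_sum_range (fun i => i) d, Finset.sum_range_id]

lemma off_sum {d : ℕ} {T : Fin d × Fin d → ℕ} (hT : ∀ a b, T (a, b) = T (b, a)) :
    ∑ c, T c = ∑ a, T (a, a) + 2 * ∑ c : {c : Fin d × Fin d // c.1 < c.2}, T c.1 := by
  classical
  have e1 : ∑ c : {c : Fin d × Fin d // c.1 < c.2}, T c.1
      = ∑ a, ∑ b, if a < b then T (a, b) else 0 := by
    rw [← Fintype.sum_prod_type' (fun a b => if a < b then T (a, b) else 0), ← Finset.sum_filter]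
    exact (Finset.sum_subtype _ (by simp) T).symm
  have e2 : ∑ a, ∑ b, (if a < b then T (a, b) else 0) = ∑ a, ∑ b, (if b < a then T (a, b) else 0) := by
    rw [Finset.sum_comm]
    refine Finset.sum_congr rfl fun a _ => Finset.sum_congr rfl fun b _ => ?_
    rw [hT]
  have e3 : ∑ a, T (a, a) = ∑ a, ∑ b, (if a = b then T (a, b) else 0) := by simp
  rw [two_mul, e1]
  nth_rw 2 [e2]
  rw [e3, Fintype.sum_prod_type, ← Finset.sum_add_distrib, ← Finset.sum_add_distrib]
  refine Finset.sum_congr rfl fun a _ => ?_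
  rw [← Finset.sum_add_distrib, ← Finset.sum_add_distrib]
  refine Finset.sum_congr rfl fun b _ => ?_
  rcases lt_trichotomy a b with h | h | h
  · simp [h, h.ne, h.not_gt]
  · simp [h]
  · simp [h, h.ne', h.not_gt]

lemma symS_card_le (n d : ℕ) (hd : 1 ≤ d) :
    (symS (Fin d) n).card ≤ (n / 2 + 1) ^ (d * (d - 1) / 2) * (wcomp n d).card := by
  classical
  let a0 : Fin d := ⟨0, hd⟩
  let P : Finset ({c : Fin d × Fin d // c.1 < c.2} → ℕ) := Fintype.piFinset fun _ => Finset.range (n / 2 + 1)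
  have hP : P.card = (n / 2 + 1) ^ (d * (d - 1) / 2) := by
    simp only [P, Fintype.card_piFinset, Finset.card_range, Finset.prod_const, Finset.card_univ]
    rw [card_lt_pairs]
  rw [← hP, ← Finset.card_product]
  refine Finset.card_le_card_of_injOn
    (fun T => (fun c => T c.1, fun a => T (a, a) + if a = a0 then
      2 * ∑ c : {c : Fin d × Fin d // c.1 < c.2}, T c.1 else 0)) ?_ ?_
  · intro T hT
    obtain ⟨h1, h2⟩ := mem_symS.1 (Finset.mem_coe.1 hT)
    rw [off_sum h2] at h1
    rw [Finset.mem_coe, Finset.mem_product]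
    constructor
    · rw [Fintype.mem_piFinset]
      intro c
      have := Finset.single_le_sum (f := fun c : {c : Fin d × Fin d // c.1 < c.2} => T c.1)
        (fun _ _ => Nat.zero_le _) (Finset.mem_univ c)
      simp only [Finset.mem_range]
      omega
    · rw [mem_wcomp]
      simp only [Finset.sum_add_distrib, Finset.sum_ite_eq', Finset.mem_univ, if_true]
      exact h1
  · intro T hT T' hT' h
    obtain ⟨-, h2⟩ := mem_symS.1 (Finset.mem_coe.1 hT)
    obtain ⟨-, h2'⟩ := mem_symS.1 (Finset.mem_coe.1 hT')
    obtain ⟨e1, e2⟩ := Prod.mk.inj h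
    have e1' : ∀ c : {c : Fin d × Fin d // c.1 < c.2}, T c.1 = T' c.1 := fun c => congrFun e1 c
    funext ⟨a, b⟩
    rcases lt_trichotomy a b with h | h | h
    · exact e1' ⟨(a, b), h⟩
    · subst h
      have := congrFun e2 a
      simp only [e1'] at this
      omega
    · rw [h2, h2']; exact e1' ⟨(b, a), h⟩

lemma multiset_eq_of_filter {s t : Multiset ℕ} (hc : s.card = t.card)
    (h : s.filter (· ≠ 0) = t.filter (· ≠ 0)) : s = t := by
  have hs := Multiset.filter_add_not (· ≠ 0) s
  have ht := Multiset.filter_add_not (· ≠ 0) t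
  have es : s.filter (fun a => ¬ (a ≠ 0)) = Multiset.replicate (s.filter (fun a => ¬ (a ≠ 0))).card 0 :=
    Multiset.eq_replicate_card.2 (by intro b hb; simpa using (Multiset.mem_filter.1 hb).2)
  have et : t.filter (fun a => ¬ (a ≠ 0)) = Multiset.replicate (t.filter (fun a => ¬ (a ≠ 0))).card 0 :=
    Multiset.eq_replicate_card.2 (by intro b hb; simpa using (Multiset.mem_filter.1 hb).2)
  have c1 := congrArg Multiset.card hs
  have c2 := congrArg Multiset.card ht
  rw [Multiset.card_add] at c1 c2
  have c3 := congrArg Multiset.card h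
  rw [← hs, ← ht, es, et, h]
  congr 2
  omega

lemma wcomp_le_fact (n d : ℕ) : (wcomp n d).card ≤ d.factorial * numPartLe n d := by
  classical
  have hN : numPartLe n d = (Finset.univ.filter (fun p : Nat.Partition n => p.parts.card ≤ d)).card := by
    rw [numPartLe, Nat.card_eq_fintype_card, Fintype.card_subtype]
  rw [hN]
  let f : (Fin d → ℕ) → Nat.Partition n := fun a =>
    if h : ∑ i, a i = n then Nat.Partition.ofSums n (List.ofFn a : Multiset ℕ)
      (by simpa [List.sum_ofFn] using h) else default
  have hf : ∀ a ∈ wcomp n d, (f a).parts = (List.ofFn a : Multiset ℕ).filter (· ≠ 0) := by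
    intro a ha
    simp only [f, dif_pos (mem_wcomp.1 ha)]
    rfl
  refine Finset.card_le_mul_card_image_of_maps_to (f := f) ?_ _ ?_
  · intro a ha
    simp only [Finset.mem_filter, Finset.mem_univ, true_and]
    rw [hf a ha]
    refine (Multiset.card_le_card (Multiset.filter_le _ _)).trans ?_
    simp
  · intro p hp
    rcases ((wcomp n d).filter (fun a => f a = p)).eq_empty_or_nonempty with h0 | ⟨a0, ha0⟩
    · rw [h0]; simp
    · rw [Finset.mem_filter] at ha0
      have hl : (List.ofFn a0).permutations.toFinset.card ≤ d.factorial := by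
        refine (List.toFinset_card_le _).trans ?_
        rw [List.length_permutations]; simp
      refine le_trans (Finset.card_le_card_of_injOn (fun a => List.ofFn a) ?_ ?_) hl
      · intro a ha
        rw [Finset.mem_coe, Finset.mem_filter] at ha
        rw [Finset.mem_coe, List.mem_toFinset, List.mem_permutations, ← Multiset.coe_eq_coe]
        apply multiset_eq_of_filter
        · simp
        · rw [← hf a ha.1, ← hf a0 ha0.1, ha.2, ha0.2]
      · intro a _ b _ h
        exact List.ofFn_injective h

lemma half_succ (d : ℕ) : (d + 1) * d / 2 = d * (d - 1) / 2 + d := by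
  have h1 := Finset.sum_range_id (d + 1)
  rw [Finset.sum_range_succ, Finset.sum_range_id] at h1
  exact h1.symm

lemma fact_le_two_pow (d : ℕ) : d.factorial ≤ 2 ^ (d * (d - 1) / 2) := by
  induction d with
  | zero => simp
  | succ k ih =>
    rw [Nat.factorial_succ, Nat.add_sub_cancel, half_succ, pow_add, mul_comm]
    exact Nat.mul_le_mul ih (Nat.lt_two_pow_self)

lemma two_num (k : ℕ) : 2 ^ ((k + 5) * (k + 4) / 2) * 3 ^ (k + 4) ≤ 2 * 3 ^ ((k + 5) * (k + 4) / 2) := by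
  induction k with
  | zero => norm_num
  | succ k ih =>
    have : (k + 1 + 5) * (k + 1 + 4) / 2 = (k + 5) * (k + 4) / 2 + (k + 5) := by
      have := half_succ (k + 5)
      exact this
    rw [this, pow_add, pow_add]
    have h2 : 2 ^ (k + 5) * 3 ≤ 3 ^ (k + 5) := by
      clear ih this
      induction k with
      | zero => norm_num
      | succ k ih => rw [show k + 1 + 5 = (k + 5) + 1 by ring, pow_succ 2 (k + 5), pow_succ 3 (k + 5)]; omega
    calc _ = (2 ^ ((k + 5) * (k + 4) / 2) * 3 ^ (k + 4)) * (2 ^ (k + 5) * 3) := by ring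
      _ ≤ (2 * 3 ^ ((k + 5) * (k + 4) / 2)) * 3 ^ (k + 5) := Nat.mul_le_mul ih h2
      _ = _ := by ring

lemma numPart_two (d : ℕ) (hd : 2 ≤ d) : 2 ≤ numPartLe 2 d := by
  classical
  rw [numPartLe, Nat.card_eq_fintype_card]
  have : 1 < Fintype.card {p : Nat.Partition 2 // p.parts.card ≤ d} := by
    rw [Fintype.one_lt_card_iff]
    refine ⟨⟨⟨{2}, by simp, by simp⟩, by simp; omega⟩, ⟨⟨{1, 1}, by simp, by simp⟩, by simpa using hd⟩, ?_⟩
    intro h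
    have := congrArg (fun p : {p : Nat.Partition 2 // p.parts.card ≤ d} => p.1.parts.card) h
    simp at this
  omega

lemma wcomp_2_3 : (wcomp 2 3).card ≤ 6 := by
  decide +kernel

lemma wcomp_2_4 : (wcomp 2 4).card ≤ 10 := by
  decide +kernel

lemma numA (n d : ℕ) (hd : 1 ≤ d) :
    (symS (Fin d) n).card ≤ (n + 1) ^ (d * (d - 1) / 2 + (d - 1)) := by
  rw [pow_add]
  refine (symS_card_le n d hd).trans (Nat.mul_le_mul (Nat.pow_le_pow_left (by omega) _) (wcomp_card_le n d hd))

lemma numB (n d : ℕ) (hn : 1 ≤ n) (hd : 1 ≤ d) :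
    (symS (Fin d) n).card ^ 2 ≤
      n ^ (d * (d - 1) / 2) * numPartLe n d * (n + 1) ^ (d * (d - 1) / 2 + (d - 1)) := by
  set r := (symS (Fin d) n).card
  have h1 := symS_card_le n d hd
  have h2 := wcomp_card_le n d hd
  have h3 := wcomp_le_fact n d
  have h4 := fact_le_two_pow d
  change r ≤ _ at h1
  by_cases h : 2 * (n / 2 + 1) ^ 2 ≤ n * (n + 1)
  · set D := d * (d - 1) / 2
    calc r ^ 2 ≤ ((n / 2 + 1) ^ D * (wcomp n d).card) ^ 2 := Nat.pow_le_pow_left h1 2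
      _ = ((n / 2 + 1) ^ 2) ^ D * ((wcomp n d).card * (wcomp n d).card) := by
          rw [mul_pow, ← pow_mul, ← pow_mul, mul_comm D 2, sq (wcomp n d).card]
      _ ≤ ((n / 2 + 1) ^ 2) ^ D * ((2 ^ D * numPartLe n d) * (n + 1) ^ (d - 1)) :=
          Nat.mul_le_mul_left _ (Nat.mul_le_mul (h3.trans (Nat.mul_le_mul_right _ h4)) h2)
      _ = (2 * (n / 2 + 1) ^ 2) ^ D * (numPartLe n d * (n + 1) ^ (d - 1)) := by
          rw [mul_pow]; ring
      _ ≤ (n * (n + 1)) ^ D * (numPartLe n d * (n + 1) ^ (d - 1)) :=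
          Nat.mul_le_mul_right _ (Nat.pow_le_pow_left h D)
      _ = _ := by rw [mul_pow]; ring
  · have hn2 : n = 2 := by
      by_contra hne
      apply h
      rcases Nat.even_or_odd' n with ⟨k, rfl | rfl⟩
      · rw [show 2 * k / 2 = k by omega]
        have : 2 ≤ k := by omega
        nlinarith
      · rw [show (2 * k + 1) / 2 = k by omega]
        nlinarith
    subst hn2
    clear h
    norm_num at h1 h2 ⊢
    rcases Nat.lt_or_ge d 2 with hd2 | hd2
    · have : d = 1 := by omega
      subst this
      norm_num at h1 h2 h3 ⊢
      have : r ≤ 1 := by omega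
      have h0 : (wcomp 2 1).card ≠ 0 := by
        apply Finset.card_ne_zero.2
        exact ⟨fun _ => 2, mem_wcomp.2 (by simp)⟩
      nlinarith
    · have hL := numPart_two d hd2
      have key : 2 ^ (d * (d - 1) / 2) * (wcomp 2 d).card ^ 2 ≤ 2 * 3 ^ (d * (d - 1) / 2 + (d - 1)) := by
        rcases (show d = 2 ∨ d = 3 ∨ d = 4 ∨ 5 ≤ d by omega) with rfl | rfl | rfl | h5
        · norm_num at h2 ⊢; nlinarith
        · have := wcomp_2_3
          norm_num; nlinarith
        · have := wcomp_2_4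
          norm_num; nlinarith
        · obtain ⟨k, rfl⟩ := Nat.exists_eq_add_of_le' h5
          have := two_num k
          simp only [show k + 5 - 1 = k + 4 by omega] at *
          calc _ ≤ 2 ^ ((k + 5) * (k + 4) / 2) * (3 ^ (k + 4)) ^ 2 :=
                Nat.mul_le_mul_left _ (Nat.pow_le_pow_left h2 2)
            _ = (2 ^ ((k + 5) * (k + 4) / 2) * 3 ^ (k + 4)) * 3 ^ (k + 4) := by ring
            _ ≤ (2 * 3 ^ ((k + 5) * (k + 4) / 2)) * 3 ^ (k + 4) := Nat.mul_le_mul_right _ this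
            _ = _ := by ring
      set D := d * (d - 1) / 2
      calc r ^ 2 ≤ (2 ^ D * (wcomp 2 d).card) ^ 2 := Nat.pow_le_pow_left h1 2
        _ = 2 ^ D * (2 ^ D * (wcomp 2 d).card ^ 2) := by ring
        _ ≤ 2 ^ D * (2 * 3 ^ (D + (d - 1))) := Nat.mul_le_mul_left _ key
        _ = 2 ^ D * 2 * 3 ^ (D + (d - 1)) := by ring
        _ ≤ _ := Nat.mul_le_mul_right _ (Nat.mul_le_mul_left _ hL)

end Numerics


section Bdd
variable {N : Type*} [Fintype N] [DecidableEq N]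

lemma trace_matFun {A : Matrix N N ℂ} (hA : A.IsHermitian) (f : ℝ → ℝ) :
    (matFun f A).trace.re = ∑ i, f (hA.eigenvalues i) := by
  rw [matFun, dif_pos hA, Matrix.trace_mul_cycle, Unitary.coe_star_mul_self, one_mul,
    Matrix.trace_diagonal, Complex.re_sum]
  simp

lemma eig_le_trace {A : Matrix N N ℂ} (hA : A.PosSemidef) (i : N) :
    hA.1.eigenvalues i ≤ A.trace.re := by
  have h := hA.1.trace_eq_sum_eigenvalues
  rw [h, Complex.re_sum]
  simpa using Finset.single_le_sum (f := hA.1.eigenvalues) (fun i _ => hA.eigenvalues_nonneg i) (Finset.mem_univ i)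

lemma trace_mpow_le {A : Matrix N N ℂ} (hA : A.PosSemidef) {p : ℝ} (hp : 0 < p) {C : ℝ}
    (hC : A.trace.re ≤ C) : (mpow A p).trace.re ≤ Fintype.card N * C ^ p := by
  rw [mpow_eq, trace_matFun hA.1]
  calc _ ≤ ∑ _i : N, C ^ p := by
        refine Finset.sum_le_sum fun i _ => ?_
        rw [pw_eq hp.ne' (hA.eigenvalues_nonneg i)]
        exact Real.rpow_le_rpow (hA.eigenvalues_nonneg i) ((eig_le_trace hA i).trans hC) hp.le
    _ = _ := by simp

end Bdd

section Gen2
variable {n : ℕ} {D : Type*} [Fintype D] [DecidableEq D]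
variable {γ δ : Type*} [Fintype γ] [DecidableEq γ] [Fintype δ] [DecidableEq δ]

lemma renArg_nonneg {p : γ → ℝ} (hp : ∀ g, 0 ≤ p g) {q : δ → ℝ} (hq : ∀ e, 0 ≤ q e)
    {ρ : γ → δ → Matrix D D ℂ} (hρ : ∀ g e, IsDensity (ρ g e)) (t : ℝ) :
    0 ≤ renArg p q ρ t := by
  refine Finset.sum_nonneg fun g _ => mul_nonneg (hp g) ?_
  refine PSD_trace_nonneg (mpow_psd ?_ _)
  exact (mix_psd hq (fun e => (hρ g e).1) _).1

lemma renArg_le {p : γ → ℝ} (hp : ∀ g, 0 ≤ p g) (hp1 : ∑ g, p g = 1)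
    {q : δ → ℝ} (hq : ∀ e, 0 ≤ q e) (hq1 : ∑ e, q e = 1)
    {ρ : γ → δ → Matrix D D ℂ} (hρ : ∀ g e, IsDensity (ρ g e)) {t : ℝ} (ht1 : t < 1) :
    renArg p q ρ t ≤ Fintype.card D * (Fintype.card D : ℝ) ^ (1 / (1 - t)) := by
  have h1 : ∀ g, (mpow (∑ e, q e • mpow (ρ g e) (1-t)) (1/(1-t))).trace.re ≤
      Fintype.card D * (Fintype.card D : ℝ) ^ (1 / (1 - t)) := by
    intro g
    refine trace_mpow_le (mix_psd hq (fun e => (hρ g e).1) _) (by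
      have : 0 < 1 - t := by linarith
      positivity) ?_
    rw [re_trace_sum]
    calc _ ≤ ∑ e, q e * (Fintype.card D : ℝ) := by
          refine Finset.sum_le_sum fun e _ => ?_
          rw [re_trace_smul]
          refine mul_le_mul_of_nonneg_left ?_ (hq e)
          have := trace_mpow_le (hρ g e).1 (p := 1 - t) (by linarith) (C := 1) (by rw [(hρ g e).2]; simp)
          simpa using this
      _ = _ := by rw [← Finset.sum_mul, hq1, one_mul]
  calc renArg p q ρ t ≤ ∑ g, p g * (Fintype.card D * (Fintype.card D : ℝ) ^ (1 / (1 - t))) :=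
        Finset.sum_le_sum fun g _ => mul_le_mul_of_nonneg_left (h1 g) (hp g)
    _ = _ := by rw [← Finset.sum_mul, hp1, one_mul]

variable {S : Type*} [Fintype S]

lemma mix_density {Q : S → ℝ} (hQ : ∀ s, 0 ≤ Q s) (hQ1 : ∑ s, Q s = 1) {ρ : S → Matrix D D ℂ}
    (hρ : ∀ s, IsDensity (ρ s)) : IsDensity (∑ s, Q s • ρ s) := by
  refine ⟨Matrix.posSemidef_sum _ fun s _ => PSD_smul (hρ s).1 (hQ s), ?_⟩
  rw [Matrix.trace_sum]
  simp only [Matrix.trace_smul, (hρ _).2]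
  simp only [Complex.real_smul, mul_one]
  exact_mod_cast hQ1

/-- the error of the first kind -/
def errF (θ : ℝ) (p : γ → ℝ) (q : δ → ℝ) (ρ : γ → δ → S → Matrix D D ℂ) (s : Fin n → S) : ℝ :=
  ∑ u : Fin n → γ, ∑ v : Fin n → δ, (∏ k, p (u k)) * (∏ k, q (v k)) *
    ((1 - uTest D θ u v) * tensorFam (fun k => ρ (u k) (v k) (s k))).trace.re

lemma errF_nonneg (θ : ℝ) {p : γ → ℝ} (hp : ∀ g, 0 ≤ p g) {q : δ → ℝ} (hq : ∀ e, 0 ≤ q e)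
    {ρ : γ → δ → S → Matrix D D ℂ} (hρ : ∀ g e s, IsDensity (ρ g e s)) (s : Fin n → S) :
    0 ≤ errF θ p q ρ s := by
  refine Finset.sum_nonneg fun u _ => Finset.sum_nonneg fun v _ => mul_nonneg (mul_nonneg
    (Finset.prod_nonneg fun _ _ => hp _) (Finset.prod_nonneg fun _ _ => hq _)) ?_
  exact PSD_trace_mul_nonneg (uTest_one_sub θ u v) (tensorFam_psd fun k => (hρ _ _ _).1)

lemma errF_term (θ : ℝ) (u : Fin n → γ) (v : Fin n → δ) (ρ : γ → δ → S → Matrix D D ℂ)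
    (s : Fin n → S) (g : Equiv.Perm (Fin n)) :
    ((1 - uTest D θ (u ∘ g) (v ∘ g)) * tensorFam (fun k => ρ ((u ∘ g) k) ((v ∘ g) k) ((s ∘ g) k))).trace =
    ((1 - uTest D θ u v) * tensorFam (fun k => ρ (u k) (v k) (s k))).trace := by
  have h1 := uTest_conj (D := D) θ u v g⁻¹
  have h2 := prep_conj_tensor g⁻¹ (fun k => ρ (u k) (v k) (s k))
  rw [inv_inv] at h1 h2
  have h3 : (fun k => ρ ((u ∘ g) k) ((v ∘ g) k) ((s ∘ g) k)) = (fun k => ρ (u k) (v k) (s k)) ∘ g := rfl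
  rw [h3, ← h2, ← h1]
  have e1 : prep n D g⁻¹ * prep n D g = 1 := by rw [← map_mul]; simp
  have e2 : prep n D g * prep n D g⁻¹ = 1 := by rw [← map_mul]; simp
  have h4 : 1 - prep n D g⁻¹ * uTest D θ u v * prep n D g
      = prep n D g⁻¹ * (1 - uTest D θ u v) * prep n D g := by
    rw [mul_sub, sub_mul, mul_one, e1]
  rw [h4]
  set P := prep n D g
  set P' := prep n D g⁻¹
  set A := 1 - uTest D θ u v
  set B := tensorFam fun k => ρ (u k) (v k) (s k)
  calc (P' * A * P * (P' * B * P)).trace = (P' * (A * (P * P') * B * P)).trace := by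
        congr 1; simp only [mul_assoc]
    _ = (A * B).trace := by
        rw [Matrix.trace_mul_comm, e2, mul_one, mul_assoc, e2, mul_one]

lemma errF_perm (θ : ℝ) (p : γ → ℝ) (q : δ → ℝ) (ρ : γ → δ → S → Matrix D D ℂ)
    (s : Fin n → S) (g : Equiv.Perm (Fin n)) : errF θ p q ρ (s ∘ g) = errF θ p q ρ s := by
  unfold errF
  rw [← (Equiv.arrowCongr g.symm (Equiv.refl γ)).sum_comp]
  refine Finset.sum_congr rfl fun u _ => ?_
  rw [← (Equiv.arrowCongr g.symm (Equiv.refl δ)).sum_comp]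
  refine Finset.sum_congr rfl fun v _ => ?_
  have eu : (Equiv.arrowCongr g.symm (Equiv.refl γ)) u = u ∘ g := rfl
  have ev : (Equiv.arrowCongr g.symm (Equiv.refl δ)) v = v ∘ g := rfl
  rw [eu, ev, errF_term]
  congr 2
  · exact prod_comp_perm p u g
  · exact prod_comp_perm q v g

lemma errF_mix (θ : ℝ) (p : γ → ℝ) (q : δ → ℝ) (ρ : γ → δ → S → Matrix D D ℂ) (Q : S → ℝ) :
    ∑ s : Fin n → S, (∏ k, Q (s k)) * errF θ p q ρ s =
      ∑ u : Fin n → γ, ∑ v : Fin n → δ, (∏ k, p (u k)) * (∏ k, q (v k)) *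
    ((1 - uTest D θ u v) * tensorFam (fun k => ∑ s, Q s • ρ (u k) (v k) s)).trace.re := by
  unfold errF
  simp only [Finset.mul_sum]
  rw [Finset.sum_comm]
  refine Finset.sum_congr rfl fun u _ => ?_
  rw [Finset.sum_comm]
  refine Finset.sum_congr rfl fun v _ => ?_
  rw [tensorFam_sum (fun _ => Q) (fun k => ρ (u k) (v k)), Finset.mul_sum, re_trace_sum, Finset.mul_sum]
  refine Finset.sum_congr rfl fun s _ => ?_
  rw [mul_smul_comm, re_trace_smul]
  ring

lemma errF_le [Nonempty D] [Nonempty S] (hn : 1 ≤ n) {θ : ℝ} (hθ : 0 < θ)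
    {p : γ → ℝ} (hp : ∀ g, 0 ≤ p g) (hp1 : ∑ g, p g = 1)
    {q : δ → ℝ} (hq : ∀ e, 0 ≤ q e)
    {ρ : γ → δ → S → Matrix D D ℂ} (hρ : ∀ g e s, IsDensity (ρ g e s)) {t : ℝ} (ht0 : 0 < t) (ht1 : t < 1)
    (s : Fin n → S) :
    ∃ Q : ProbVec S, errF θ p q ρ s ≤ ((n:ℝ)+1)^(Fintype.card S - 1) *
      (θ^t * (((symS D n).card:ℝ)^Fintype.card γ)^t *
        (renArg p q (fun g e => ∑ s, Q.1 s • ρ g e s) t ^ (1-t))^n) := by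
  classical
  obtain ⟨Q, hQ, hQ1, h⟩ := type_step hn (errF θ p q ρ) (errF_nonneg θ hp hq hρ)
    (errF_perm θ p q ρ) s
  refine ⟨⟨Q, hQ, hQ1⟩, h.trans (mul_le_mul_of_nonneg_left ?_ (by positivity))⟩
  rw [errF_mix]
  exact partA hθ hp hp1 hq _ (fun g e => mix_density hQ hQ1 (hρ g e)) ht0 ht1

lemma renyi_bdd {p : γ → ℝ} (hp : ∀ g, 0 ≤ p g) (hp1 : ∑ g, p g = 1)
    {q : δ → ℝ} (hq : ∀ e, 0 ≤ q e) (hq1 : ∑ e, q e = 1)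
    {ρ : γ → δ → S → Matrix D D ℂ} (hρ : ∀ g e s, IsDensity (ρ g e s)) {t : ℝ} (ht0 : 0 < t) (ht1 : t < 1) :
    BddBelow (Set.range fun Q : ProbVec S =>
      -((1 - t) / t) * Real.logb 2 (renArg p q (fun g e => ∑ s, Q.1 s • ρ g e s) t)) := by
  set C : ℝ := Fintype.card D * (Fintype.card D : ℝ) ^ (1 / (1 - t))
  refine ⟨-((1 - t) / t) * max 0 (Real.logb 2 C), ?_⟩
  rintro _ ⟨Q, rfl⟩
  have hd : ∀ g e, IsDensity (∑ s, Q.1 s • ρ g e s) := fun g e => mix_density Q.2.1 Q.2.2 (hρ g e)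
  have h0 := renArg_nonneg hp hq hd t
  have h1 := renArg_le hp hp1 hq hq1 hd ht1
  have hc : 0 ≤ (1 - t) / t := div_nonneg (by linarith) ht0.le
  have : Real.logb 2 (renArg p q (fun g e => ∑ s, Q.1 s • ρ g e s) t) ≤ max 0 (Real.logb 2 C) := by
    rcases h0.eq_or_lt with h | h
    · rw [← h]; simp
    · exact le_max_of_le_right (Real.logb_le_logb_of_le (by norm_num) h h1)
  simp only [neg_mul, neg_le_neg_iff]
  exact mul_le_mul_of_nonneg_left this hc

lemma renyi_pow (hn : 1 ≤ n) {a t I : ℝ} (ha : 0 ≤ a) (ht0 : 0 < t) (ht1 : t < 1)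
    (hI : I ≤ -((1 - t) / t) * Real.logb 2 a) :
    (a ^ (1 - t)) ^ n ≤ (2:ℝ) ^ (-((n:ℝ) * t * I)) := by
  rcases ha.eq_or_lt with h | h
  · rw [← h, Real.zero_rpow (by linarith), zero_pow (by omega)]
    positivity
  · have e : (a ^ (1 - t)) ^ n = (2:ℝ) ^ (-((n:ℝ) * t * (-((1 - t) / t) * Real.logb 2 a))) := by
      rw [← Real.rpow_natCast]
      have e2 : -((n:ℝ) * t * (-((1 - t) / t) * Real.logb 2 a)) = Real.logb 2 a * ((1 - t) * n) := by
        field_simp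
      rw [e2, Real.rpow_mul (by norm_num : (0:ℝ) ≤ 2), Real.rpow_logb (by norm_num) (by norm_num) h, Real.rpow_mul ha]
    rw [e]
    apply Real.rpow_le_rpow_of_exponent_le (by norm_num)
    have : 0 ≤ (n:ℝ) * t := by positivity
    have := mul_le_mul_of_nonneg_left hI this
    linarith

end Gen2

section Gen3
variable {n d : ℕ} {γ δ S : Type*} [Fintype γ] [DecidableEq γ] [Fintype δ] [DecidableEq δ] [Fintype S]

/-- threshold of the universal test -/
def thr (n d a b : ℕ) (R : ℝ) : ℝ :=
  (2:ℝ) ^ ((n:ℝ) * R) * ((symS (Fin d) n).card : ℝ) ^ (a * b) / gFac n a d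

lemma half_cast (d : ℕ) : ((d * (d - 1) / 2 : ℕ) : ℝ) = (d : ℝ) * ((d:ℝ) - 1) / 2 := by
  have h := Finset.sum_range_id_mul_two d
  rw [Finset.sum_range_id] at h
  have h2 : ((d * (d - 1) / 2 : ℕ) : ℝ) * 2 = ((d * (d - 1) : ℕ) : ℝ) := by exact_mod_cast h
  rcases Nat.eq_zero_or_pos d with rfl | hd
  · simp
  · rw [Nat.cast_mul, Nat.cast_sub (by omega), Nat.cast_one] at h2
    linarith

lemma gFac_eq (n c d : ℕ) : gFac n c d = ((n:ℝ) ^ (d * (d - 1) / 2) * (numPartLe n d : ℝ)) ^ c := by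
  rw [gFac, mul_pow]
  congr 1
  rw [← pow_mul, ← Real.rpow_natCast, Nat.cast_mul, half_cast]
  congr 1; ring

lemma symS_pos (n d : ℕ) (hd : 1 ≤ d) : 0 < (symS (Fin d) n).card := by
  apply Finset.card_pos.2
  let a0 : Fin d := ⟨0, hd⟩
  refine ⟨fun c => if c = (a0, a0) then n else 0, mem_symS.2 ⟨by simp, ?_⟩⟩
  intro a b
  simp only [Prod.mk.injEq, and_comm]

lemma numPart_pos (n d : ℕ) (hn : 1 ≤ n) (hd : 1 ≤ d) : 0 < numPartLe n d := by
  have h := numB n d hn hd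
  have h0 := symS_pos n d hd
  by_contra hh
  have : numPartLe n d = 0 := by omega
  rw [this] at h
  simp only [mul_zero, zero_mul, Nat.le_zero] at h
  exact absurd (pow_eq_zero_iff (by norm_num) |>.1 h) (by omega)

lemma gFac_pos (n c d : ℕ) (hn : 1 ≤ n) (hd : 1 ≤ d) : 0 < gFac n c d := by
  rw [gFac_eq]
  have := numPart_pos n d hn hd
  have hn' : (0:ℝ) < n := by exact_mod_cast hn
  positivity

lemma thr_pos (n d a b : ℕ) (R : ℝ) (hn : 1 ≤ n) (hd : 1 ≤ d) : 0 < thr n d a b R := by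
  have h1 := gFac_pos n a d hn hd
  have h2 := symS_pos n d hd
  unfold thr
  positivity

lemma key_num (n d a b : ℕ) (hn : 1 ≤ n) (hd : 1 ≤ d) (hb : 1 ≤ b) :
    ((symS (Fin d) n).card : ℝ) ^ (a * b) / gFac n a d * ((symS (Fin d) n).card : ℝ) ^ a ≤
      ((n:ℝ) + 1) ^ (a * b * (d * (d - 1) / 2 + (d - 1))) := by
  have hA : ((symS (Fin d) n).card : ℝ) ≤ ((n:ℝ) + 1) ^ (d * (d - 1) / 2 + (d - 1)) := by
    exact_mod_cast numA n d hd
  have hB : ((symS (Fin d) n).card : ℝ) ^ 2 ≤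
      ((n:ℝ) ^ (d * (d - 1) / 2) * (numPartLe n d : ℝ)) * ((n:ℝ) + 1) ^ (d * (d - 1) / 2 + (d - 1)) := by
    exact_mod_cast numB n d hn hd
  rw [div_mul_eq_mul_div, div_le_iff₀ (gFac_pos n a d hn hd), gFac_eq]
  obtain ⟨b, rfl⟩ := Nat.exists_eq_add_of_le' hb
  set r := ((symS (Fin d) n).card : ℝ)
  set E := d * (d - 1) / 2 + (d - 1)
  set G := ((n:ℝ) ^ (d * (d - 1) / 2) * (numPartLe n d : ℝ))
  have hG : 0 ≤ G := by positivity
  calc r ^ (a * (b + 1)) * r ^ a = r ^ (a * b) * (r ^ 2) ^ a := by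
        rw [← pow_mul, ← pow_add, ← pow_add]; congr 1; ring
    _ ≤ (((n:ℝ) + 1) ^ E) ^ (a * b) * (G * ((n:ℝ) + 1) ^ E) ^ a := by gcongr
    _ = _ := by rw [mul_pow, ← pow_mul, ← pow_mul, mul_comm (G ^ a), ← mul_assoc, ← pow_add]; congr 2; ring

lemma genB [Nonempty (Fin d)] (hn : 1 ≤ n) (R : ℝ) {p : γ → ℝ} (hp : ∀ g, 0 ≤ p g) (hp1 : ∑ g, p g = 1)
    {q : δ → ℝ} (hq : ∀ e, 0 ≤ q e) (hq1 : ∑ e, q e = 1)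
    (σ : (Fin n → γ) → Matrix (Fin n → Fin d) (Fin n → Fin d) ℂ) (hσ : ∀ u, IsDensity (σ u)) :
    ∑ u : Fin n → γ, ∑ v : Fin n → δ, (∏ k, p (u k)) * (∏ k, q (v k)) *
      (uTest (Fin d) (thr n d (Fintype.card γ) (Fintype.card δ) R) u v * σ u).trace.re ≤
      gFac n (Fintype.card γ) d * (2:ℝ) ^ (-(n:ℝ) * R) := by
  have hd : 1 ≤ d := by
    obtain ⟨i⟩ := ‹Nonempty (Fin d)›
    have := i.2; omega
  refine (partB (thr_pos n d _ _ R hn hd) hp hp1 hq hq1 σ hσ).trans (le_of_eq ?_)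
  have h1 := gFac_pos n (Fintype.card γ) d hn hd
  have h2 : (0:ℝ) < ((symS (Fin d) n).card : ℝ) := by exact_mod_cast symS_pos n d hd
  unfold thr
  rw [neg_mul, Real.rpow_neg (by norm_num)]
  have h3 : (0:ℝ) < 2 ^ ((n:ℝ) * R) := by positivity
  field_simp

lemma genA [Nonempty (Fin d)] [Nonempty S] (hn : 1 ≤ n) (R : ℝ) {p : γ → ℝ} (hp : ∀ g, 0 ≤ p g) (hp1 : ∑ g, p g = 1)
    {q : δ → ℝ} (hq : ∀ e, 0 ≤ q e) (hq1 : ∑ e, q e = 1)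
    {ρ : γ → δ → S → Matrix (Fin d) (Fin d) ℂ} (hρ : ∀ g e s, IsDensity (ρ g e s)) {t : ℝ}
    (ht0 : 0 < t) (ht1 : t < 1) (s : Fin n → S) :
    errF (thr n d (Fintype.card γ) (Fintype.card δ) R) p q ρ s ≤
      fFac n (Fintype.card S) (Fintype.card γ) (Fintype.card δ) d t *
        (2:ℝ) ^ ((n:ℝ) * t * (R - ⨅ Q : ProbVec S,
          -((1 - t) / t) * Real.logb 2 (renArg p q (fun g e => ∑ s, Q.1 s • ρ g e s) t))) := by
  have hd : 1 ≤ d := by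
    obtain ⟨i⟩ := ‹Nonempty (Fin d)›
    have := i.2; omega
  have hb : 1 ≤ Fintype.card δ := by
    rw [Nat.one_le_iff_ne_zero, Ne, Fintype.card_eq_zero_iff]
    intro h
    simp at hq1
  have hθ := thr_pos n d (Fintype.card γ) (Fintype.card δ) R hn hd
  obtain ⟨Q, hQ⟩ := errF_le hn hθ hp hp1 hq hρ ht0 ht1 s
  refine hQ.trans ?_
  have hI := ciInf_le (renyi_bdd hp hp1 hq hq1 hρ ht0 ht1) Q
  set I := ⨅ Q : ProbVec S,
          -((1 - t) / t) * Real.logb 2 (renArg p q (fun g e => ∑ s, Q.1 s • ρ g e s) t)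
  have hd' : ∀ g e, IsDensity (∑ s, Q.1 s • ρ g e s) := fun g e => mix_density Q.2.1 Q.2.2 (hρ g e)
  have h3 := renyi_pow hn (renArg_nonneg hp hq hd' t) ht0 ht1 hI
  have h2 := key_num n d (Fintype.card γ) (Fintype.card δ) hn hd hb
  have hg := gFac_pos n (Fintype.card γ) d hn hd
  set r := ((symS (Fin d) n).card : ℝ)
  set a := Fintype.card γ
  set b := Fintype.card δ
  set θ := thr n d a b R with hθd
  have hr : 0 ≤ r := by positivity
  have e1 : θ ^ t * (r ^ a) ^ t ≤ (2:ℝ) ^ ((n:ℝ) * t * R) *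
      ((n:ℝ) + 1) ^ (t * a * b * ((d:ℝ) - 1) * d / 2 + ((d:ℝ) - 1) * t * a * b) := by
    rw [← Real.mul_rpow hθ.le (by positivity)]
    have : θ * r ^ a ≤ (2:ℝ) ^ ((n:ℝ) * R) * ((n:ℝ) + 1) ^ (a * b * (d * (d - 1) / 2 + (d - 1))) := by
      calc θ * r ^ a = (2:ℝ) ^ ((n:ℝ) * R) * (r ^ (a * b) / gFac n a d * r ^ a) := by
            rw [hθd, thr]; ring
        _ ≤ _ := mul_le_mul_of_nonneg_left h2 (by positivity)
    refine (Real.rpow_le_rpow (by positivity) this ht0.le).trans (le_of_eq ?_)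
    rw [Real.mul_rpow (by positivity) (by positivity), ← Real.rpow_mul (by norm_num),
      ← Real.rpow_natCast, ← Real.rpow_mul (by positivity)]
    congr 2
    · ring
    · rw [Nat.cast_mul, Nat.cast_mul, Nat.cast_add, half_cast, Nat.cast_sub hd]
      push_cast; ring
  have hS : ((n:ℝ)+1)^(Fintype.card S - 1) = ((n:ℝ)+1) ^ ((Fintype.card S : ℝ) - 1) := by
    rw [← Real.rpow_natCast, Nat.cast_sub Fintype.card_pos, Nat.cast_one]
  rw [hS]
  calc _ ≤ ((n:ℝ)+1) ^ ((Fintype.card S : ℝ) - 1) * (((2:ℝ) ^ ((n:ℝ) * t * R) *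
      ((n:ℝ) + 1) ^ (t * a * b * ((d:ℝ) - 1) * d / 2 + ((d:ℝ) - 1) * t * a * b)) *
        (2:ℝ) ^ (-((n:ℝ) * t * I))) := by
        gcongr
        exact pow_nonneg (Real.rpow_nonneg (renArg_nonneg hp hq hd' t) _) _
    _ = _ := by
        have hn1 : (0:ℝ) < (n:ℝ) + 1 := by positivity
        have e2 : (2:ℝ) ^ ((n:ℝ) * t * (R - I)) = (2:ℝ) ^ ((n:ℝ) * t * R) * (2:ℝ) ^ (-((n:ℝ) * t * I)) := by
          rw [← Real.rpow_add (by norm_num : (0:ℝ) < 2)]; congr 1; ring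
        rw [fFac, e2, add_assoc, Real.rpow_add hn1 ((Fintype.card S : ℝ) - 1)]
        generalize ((n:ℝ) + 1) ^ ((Fintype.card S : ℝ) - 1) = z1
        generalize ((n:ℝ) + 1) ^ (t * a * b * ((d:ℝ) - 1) * d / 2 + ((d:ℝ) - 1) * t * a * b) = z2
        generalize (2:ℝ) ^ ((n:ℝ) * t * R) = z3
        generalize (2:ℝ) ^ (-((n:ℝ) * t * I)) = z4
        ring

end Gen3


section Blk
variable {X Y B : Type*} [Fintype X] [DecidableEq X] [Fintype Y] [DecidableEq Y] [Fintype B] [DecidableEq B]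

/-- block diagonal operators -/
def blk (T : X → Y → Matrix B B ℂ) : Matrix ((X × Y) × B) ((X × Y) × B) ℂ :=
  (Matrix.blockDiagonal (fun xy : X × Y => T xy.1 xy.2)).submatrix Prod.swap Prod.swap

open scoped MatrixOrder Matrix.Norms.L2Operator in
lemma psd_exists_sq {A : Matrix B B ℂ} (hA : A.PosSemidef) : ∃ C : Matrix B B ℂ, A = Cᴴ * C :=
  CStarAlgebra.nonneg_iff_eq_star_mul_self.mp hA.nonneg

lemma blockDiagonal_psd {O : Type*} [Fintype O] [DecidableEq O] {M : O → Matrix B B ℂ}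
    (hM : ∀ o, (M o).PosSemidef) : (Matrix.blockDiagonal M).PosSemidef := by
  have h : ∀ o, ∃ C : Matrix B B ℂ, M o = Cᴴ * C := fun o =>
    psd_exists_sq (hM o)
  choose C hC using h
  have : Matrix.blockDiagonal M = (Matrix.blockDiagonal C)ᴴ * Matrix.blockDiagonal C := by
    rw [Matrix.blockDiagonal_conjTranspose, ← Matrix.blockDiagonal_mul]
    congr 1
    funext o; exact hC o
  rw [this]
  exact Matrix.posSemidef_conjTranspose_mul_self _

lemma blk_psd {T : X → Y → Matrix B B ℂ} (hT : ∀ x y, (T x y).PosSemidef) : (blk T).PosSemidef :=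
  (blockDiagonal_psd (M := fun xy : X × Y => T xy.1 xy.2) fun o => hT o.1 o.2).submatrix _

lemma one_sub_blk (T : X → Y → Matrix B B ℂ) : 1 - blk T = blk (fun x y => 1 - T x y) := by
  ext ⟨⟨x, y⟩, b⟩ ⟨⟨x', y'⟩, b'⟩
  simp only [blk, Matrix.sub_apply, Matrix.submatrix_apply, Matrix.blockDiagonal_apply, Prod.swap,
    Matrix.one_apply]
  by_cases h : (x, y) = (x', y')
  · simp [h]
  · simp [h]

lemma trace_blk_cq (T : X → Y → Matrix B B ℂ) (wX : X → ℝ) (wY : Y → ℝ) (ρ : X → Y → Matrix B B ℂ) :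
    (blk T * cqState2 wX wY ρ).trace.re = ∑ x, ∑ y, wX x * wY y * (T x y * ρ x y).trace.re := by
  have h : cqState2 wX wY ρ = blk (fun x y => (wX x * wY y) • ρ x y) := by
    ext ⟨⟨x, y⟩, b⟩ ⟨⟨x', y'⟩, b'⟩
    simp only [blk, cqState2, Matrix.of_apply, Matrix.submatrix_apply, Matrix.blockDiagonal_apply, Prod.swap]
    by_cases h : (x, y) = (x', y')
    · simp [h]
    · simp [h]
  have h2 : (blk T * blk (fun x y => (wX x * wY y) • ρ x y)).trace =
      ∑ xy : X × Y, (T xy.1 xy.2 * ((wX xy.1 * wY xy.2) • ρ xy.1 xy.2)).trace := by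
    rw [blk, blk, ← Matrix.trace_blockDiagonal, Matrix.blockDiagonal_mul]
    have := Matrix.submatrix_mul_equiv (Matrix.blockDiagonal (fun xy : X × Y => T xy.1 xy.2))
      (Matrix.blockDiagonal (fun xy : X × Y => (wX xy.1 * wY xy.2) • ρ xy.1 xy.2))
      (Prod.swap : (X × Y) × B → B × (X × Y)) (Equiv.prodComm (X × Y) B) (Prod.swap : (X × Y) × B → B × (X × Y))
    rw [Equiv.coe_prodComm] at this
    rw [this]
    simp only [Matrix.trace, Matrix.diag_apply, Matrix.submatrix_apply]
    exact (Equiv.prodComm (X × Y) B).sum_comp (fun i => (Matrix.blockDiagonal (fun xy : X × Y => T xy.1 xy.2) *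
      Matrix.blockDiagonal (fun xy : X × Y => (wX xy.1 * wY xy.2) • ρ xy.1 xy.2)) i i)
  rw [h, h2, Complex.re_sum, Fintype.sum_prod_type]
  refine Finset.sum_congr rfl fun x _ => Finset.sum_congr rfl fun y _ => ?_
  rw [mul_smul_comm, re_trace_smul]

end Blk

section Fin1

lemma sum_pair_words {n : ℕ} {X Y : Type*} [Fintype X] [DecidableEq X] [Fintype Y] [DecidableEq Y]
    (f : (Fin n → X × Y) → ℝ) :
    ∑ v, f v = ∑ x : Fin n → X, ∑ y : Fin n → Y, f (fun k => (x k, y k)) := by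
  rw [← (Equiv.arrowProdEquivProdArrow (Fin n) (fun _ => X) (fun _ => Y)).symm.sum_comp, Fintype.sum_prod_type]
  rfl

lemma sum_unit_words {n : ℕ} (f : (Fin n → Unit) → ℝ) : ∑ u, f u = f (fun _ => ()) := by
  rw [Fintype.sum_unique]

lemma fFac_comm (n s a b d : ℕ) (t : ℝ) : fFac n s a b d t = fFac n s b a d t := by
  unfold fFac; congr 1; ring

lemma fFac_one (n s a b d : ℕ) (t : ℝ) : fFac n s 1 (a * b) d t = fFac n s a b d t := by
  unfold fFac; congr 1; push_cast; ring

end Fin1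


/-- For finite `𝒮`: universal tests `T_X`, `T_Y`, `T₀` for multiple
independence testing, with the bounds (i)–(vi). -/
theorem statement7 {𝒳 𝒴 𝒮 : Type*} [Fintype 𝒳] [DecidableEq 𝒳] [Fintype 𝒴] [DecidableEq 𝒴]
    [Fintype 𝒮] [Nonempty 𝒮] {d : ℕ}
    (ρ : 𝒳 → 𝒴 → 𝒮 → Matrix (Fin d) (Fin d) ℂ)
    (hρ : ∀ x y s, IsDensity (ρ x y s))
    (n : ℕ) (hn : 1 ≤ n) (R1 R2 : ℝ) (hR1 : 0 < R1) (hR2 : 0 < R2) :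
    ∃ TXt TYt T0 : Matrix (((Fin n → 𝒳) × (Fin n → 𝒴)) × (Fin n → Fin d))
        (((Fin n → 𝒳) × (Fin n → 𝒴)) × (Fin n → Fin d)) ℂ,
      TXt.PosSemidef ∧ (1 - TXt).PosSemidef ∧ TYt.PosSemidef ∧ (1 - TYt).PosSemidef ∧
      T0.PosSemidef ∧ (1 - T0).PosSemidef ∧
      ∀ PX : 𝒳 → ℝ, (∀ x, 0 ≤ PX x) → (∑ x, PX x = 1) →
      ∀ PY : 𝒴 → ℝ, (∀ y, 0 ≤ PY y) → (∑ y, PY y = 1) →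
      ∀ t : ℝ, t ∈ Set.Ioo (0 : ℝ) 1 →
        -- (i)
        (∀ sv : Fin n → 𝒮,
          (Matrix.trace ((1 - TXt) *
            cq2n n PX PY (fun xv yv => tensorFam fun k => ρ (xv k) (yv k) (sv k)))).re ≤
            fFac n (Fintype.card 𝒮) (Fintype.card 𝒳) (Fintype.card 𝒴) d t *
              (2 : ℝ) ^ ((n : ℝ) * t *
                (R2 - ⨅ Q : ProbVec 𝒮,
                  renyiYgX PX PY (fun x y => ∑ s, Q.1 s • ρ x y s) t))) ∧
        -- (ii)
        (∀ σf : (Fin n → 𝒳) → Matrix (Fin n → Fin d) (Fin n → Fin d) ℂ,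
          (∀ xv, IsDensity (σf xv)) →
          (Matrix.trace (TXt * cq2n n PX PY (fun xv _ => σf xv))).re ≤
            gFac n (Fintype.card 𝒳) d * (2 : ℝ) ^ (-(n : ℝ) * R2)) ∧
        -- (iii)
        (∀ sv : Fin n → 𝒮,
          (Matrix.trace ((1 - TYt) *
            cq2n n PX PY (fun xv yv => tensorFam fun k => ρ (xv k) (yv k) (sv k)))).re ≤
            fFac n (Fintype.card 𝒮) (Fintype.card 𝒳) (Fintype.card 𝒴) d t *
              (2 : ℝ) ^ ((n : ℝ) * t *
                (R1 - ⨅ Q : ProbVec 𝒮,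
                  renyiXgY PX PY (fun x y => ∑ s, Q.1 s • ρ x y s) t))) ∧
        -- (iv)
        (∀ σf : (Fin n → 𝒴) → Matrix (Fin n → Fin d) (Fin n → Fin d) ℂ,
          (∀ yv, IsDensity (σf yv)) →
          (Matrix.trace (TYt * cq2n n PX PY (fun _ yv => σf yv))).re ≤
            gFac n (Fintype.card 𝒴) d * (2 : ℝ) ^ (-(n : ℝ) * R1)) ∧
        -- (v)
        (∀ sv : Fin n → 𝒮,
          (Matrix.trace ((1 - T0) *
            cq2n n PX PY (fun xv yv => tensorFam fun k => ρ (xv k) (yv k) (sv k)))).re ≤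
            fFac n (Fintype.card 𝒮) (Fintype.card 𝒳) (Fintype.card 𝒴) d t *
              (2 : ℝ) ^ ((n : ℝ) * t *
                (R1 + R2 - ⨅ Q : ProbVec 𝒮,
                  renyiXY PX PY (fun x y => ∑ s, Q.1 s • ρ x y s) t))) ∧
        -- (vi)
        (∀ σ : Matrix (Fin n → Fin d) (Fin n → Fin d) ℂ, IsDensity σ →
          (Matrix.trace (T0 * cq2n n PX PY (fun _ _ => σ))).re ≤
            gFac n 1 d * (2 : ℝ) ^ (-(n : ℝ) * (R1 + R2))) := by
  classical
  refine ⟨blk (fun xv yv => uTest (Fin d) (thr n d (Fintype.card 𝒳) (Fintype.card 𝒴) R2) xv yv),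
    blk (fun xv yv => uTest (Fin d) (thr n d (Fintype.card 𝒴) (Fintype.card 𝒳) R1) yv xv),
    blk (fun xv yv => uTest (Fin d) (thr n d (Fintype.card Unit) (Fintype.card (𝒳 × 𝒴)) (R1 + R2))
      (fun _ => ()) (fun k => (xv k, yv k))),
    blk_psd fun _ _ => uTest_psd _ _ _, ?_, blk_psd fun _ _ => uTest_psd _ _ _, ?_,
    blk_psd fun _ _ => uTest_psd _ _ _, ?_, ?_⟩
  · rw [one_sub_blk]; exact blk_psd fun _ _ => uTest_one_sub _ _ _
  · rw [one_sub_blk]; exact blk_psd fun _ _ => uTest_one_sub _ _ _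
  · rw [one_sub_blk]; exact blk_psd fun _ _ => uTest_one_sub _ _ _
  intro PX hPX hPX1 PY hPY hPY1 t ht
  obtain ⟨ht0, ht1⟩ := ht
  have hX : Nonempty 𝒳 := by
    by_contra h
    rw [not_nonempty_iff] at h
    simp at hPX1
  have hY : Nonempty 𝒴 := by
    by_contra h
    rw [not_nonempty_iff] at h
    simp at hPY1
  have hD : Nonempty (Fin d) := by
    by_contra h
    rw [not_nonempty_iff] at h
    obtain ⟨x⟩ := hX
    obtain ⟨y⟩ := hY
    obtain ⟨s⟩ := ‹Nonempty 𝒮›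
    have := (hρ x y s).2
    simp [Matrix.trace] at this
  refine ⟨?_, ?_, ?_, ?_, ?_, ?_⟩
  · intro sv
    rw [one_sub_blk, cq2n, trace_blk_cq]
    exact genA hn R2 hPX hPX1 hPY hPY1 hρ ht0 ht1 sv
  · intro σf hσ
    rw [cq2n, trace_blk_cq]
    exact genB hn R2 hPX hPX1 hPY hPY1 σf hσ
  · intro sv
    rw [one_sub_blk, cq2n, trace_blk_cq, fFac_comm]
    have h := genA hn R1 hPY hPY1 hPX hPX1 (ρ := fun y x s => ρ x y s) (fun y x s => hρ x y s) ht0 ht1 sv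
    refine le_trans (le_of_eq ?_) h
    rw [errF, Finset.sum_comm]
    refine Finset.sum_congr rfl fun u _ => Finset.sum_congr rfl fun v _ => ?_
    rw [mul_comm (∏ k, PX (v k))]
  · intro σf hσ
    rw [cq2n, trace_blk_cq]
    have h := genB hn R1 hPY hPY1 hPX hPX1 σf hσ
    refine le_trans (le_of_eq ?_) h
    rw [Finset.sum_comm]
    refine Finset.sum_congr rfl fun u _ => Finset.sum_congr rfl fun v _ => ?_
    rw [mul_comm (∏ k, PX (v k))]
  · intro sv
    rw [one_sub_blk, cq2n, trace_blk_cq]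
    have hq : ∀ e : 𝒳 × 𝒴, 0 ≤ PX e.1 * PY e.2 := fun e => mul_nonneg (hPX _) (hPY _)
    have hq1 : ∑ e : 𝒳 × 𝒴, PX e.1 * PY e.2 = 1 := by
      rw [Fintype.sum_prod_type, ← Finset.sum_mul_sum, hPX1, hPY1, one_mul]
    have h := genA hn (R1 + R2) (γ := Unit) (p := fun _ => 1) (fun _ => zero_le_one) (by simp)
      hq hq1 (ρ := fun _ e s => ρ e.1 e.2 s) (fun _ e s => hρ e.1 e.2 s) ht0 ht1 sv
    have hr : ∀ Q : ProbVec 𝒮, renyiXY PX PY (fun x y => ∑ s, Q.1 s • ρ x y s) t =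
        -((1 - t) / t) * Real.logb 2 (renArg (fun _ : Unit => 1) (fun e : 𝒳 × 𝒴 => PX e.1 * PY e.2)
          (fun _ e => ∑ s, Q.1 s • ρ e.1 e.2 s) t) := by
      intro Q
      rw [renyiXY, renArg]
      simp only [Finset.univ_unique, Finset.sum_singleton, one_mul, Fintype.sum_prod_type]
    simp only [hr]
    rw [← fFac_one, ← Fintype.card_prod]
    refine le_trans (le_of_eq ?_) h
    rw [errF, sum_unit_words, sum_pair_words]
    refine Finset.sum_congr rfl fun u _ => Finset.sum_congr rfl fun v _ => ?_
    simp only [Finset.prod_const_one, one_mul, Finset.prod_mul_distrib]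
  · intro σ hσ
    rw [cq2n, trace_blk_cq]
    have hq : ∀ e : 𝒳 × 𝒴, 0 ≤ PX e.1 * PY e.2 := fun e => mul_nonneg (hPX _) (hPY _)
    have hq1 : ∑ e : 𝒳 × 𝒴, PX e.1 * PY e.2 = 1 := by
      rw [Fintype.sum_prod_type, ← Finset.sum_mul_sum, hPX1, hPY1, one_mul]
    have h := genB hn (R1 + R2) (γ := Unit) (p := fun _ => 1) (fun _ => zero_le_one) (by simp)
      hq hq1 (fun _ => σ) (fun _ => hσ)
    refine le_trans (le_of_eq ?_) h
    rw [sum_unit_words, sum_pair_words]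
    refine Finset.sum_congr rfl fun u _ => Finset.sum_congr rfl fun v _ => ?_
    simp only [Finset.prod_const_one, one_mul, Finset.prod_mul_distrib]
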